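/- arXiv:2001.06994 — 9 statements merged into one kernel-verified Lean document; each statement's English description precedes it below -/
import Mathlib

section
/- Let p be a prime and let A, B ⊆ GF(p) each have at least two elements, with |A|·|B| < p. Then the point set A × B ⊆ AG(2,p) determines at least |A|·|B| − min{|A|, |B|} + 2 directions; that is, the set D ⊆ GF(p) ∪ {∞} of directions determined by A × B satisfies |D| ≥ |A||B| − min{|A|,|B|} + 2. -/
/-!
The proof is the Rédei polynomial method with Szőnyi's extension. Let `n = |A||B|`, let `D` be the
set of directions, and let `H(x, y) = ∏ (x - (b - a y))` over `(a, b) ∈ A × B`. Divide `x ^ p` by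
`H` in the variable `x`: `x ^ p = H f + r` with `deg_x r < n`. As `H` has total degree `n`, the
coefficient of `x ^ i` in `r` has degree at most `p - i` in `y` (`exists_weighted_remainder`).

If the finite direction `m` is not determined, the roots `b - a m` are distinct, so `H(x, m)`
divides `x ^ p - x` and `r(x, m) = x` (`remainder_eq_X`). Hence every coefficient of `r` other
than that of `x` vanishes at the `p + 1 - |D|` nondetermined directions (`∞` is determined), and the
coefficients of index at least `|D|` are identically zero (`remainder_coeff_eq_zero`).

At `y = 0` this makes `∏ (x - b) ^ |A|` over `b ∈ B` divide `x ^ p - g` with `deg g ≤ |D| - 1`.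
Differentiating, `∏ (x - b) ^ (|A| - 1)` divides `g'`. If `g' = 0` then `g` is constant, and
`x ^ p - g` has a single root, against `|B| ≥ 2`; so `|B| (|A| - 1) ≤ deg g' ≤ |D| - 2`
(`lacunary_bound`). Exchanging the coordinates gives the same bound with `|A|` and `|B|` swapped.
-/

/-- The set of directions (elements of `GF(p) ∪ {∞}`, encoded as `Option (ZMod p)`
with `none = ∞`) determined by a point set `U ⊆ AG(2,p) = (ZMod p)²`. -/
def dirSet (p : ℕ) (U : Set (ZMod p × ZMod p)) : Set (Option (ZMod p)) :=
  {d | ∃ P ∈ U, ∃ Q ∈ U, P ≠ Q ∧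
    ((P.1 = Q.1 ∧ d = none) ∨ (P.1 ≠ Q.1 ∧ d = some ((P.2 - Q.2) * (P.1 - Q.1)⁻¹)))}

open Polynomial

/-! ### Total degree and division by a monic polynomial -/

/-- A bivariate polynomial, encoded in `F[y][x]`, has total degree at most `k`. -/
def TotalDegLE {F : Type*} [Field F] (k : ℕ) (q : F[X][X]) : Prop :=
  ∀ i j, k < i + j → (q.coeff i).coeff j = 0

section Weight

variable {F : Type*} [Field F]

lemma TotalDegLE.mul {k l : ℕ} {q s : F[X][X]} (hq : TotalDegLE k q) (hs : TotalDegLE l s) :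
    TotalDegLE (k + l) (q * s) := by
  intro i j hij
  rw [coeff_mul, finsetSum_coeff]
  refine Finset.sum_eq_zero fun u hu => ?_
  rw [coeff_mul]
  refine Finset.sum_eq_zero fun v hv => ?_
  rw [Finset.HasAntidiagonal.mem_antidiagonal] at hu hv
  by_cases h : k < u.1 + v.1
  · rw [hq _ _ h, zero_mul]
  · rw [hs _ _ (by omega), mul_zero]

lemma TotalDegLE.sub {k : ℕ} {q s : F[X][X]} (hq : TotalDegLE k q) (hs : TotalDegLE k s) :
    TotalDegLE k (q - s) := by
  intro i j hij
  rw [coeff_sub, coeff_sub, hq _ _ hij, hs _ _ hij, sub_zero]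

lemma TotalDegLE.one : TotalDegLE 0 (1 : F[X][X]) := by
  intro i j hij
  by_cases h : i = 0
  · subst h
    simp [coeff_one, show j ≠ 0 by omega]
  · simp [coeff_one, h]

lemma TotalDegLE.X : TotalDegLE 1 (X : F[X][X]) := by
  intro i j hij
  by_cases h : 1 = i
  · subst h
    simp [coeff_one, show j ≠ 0 by omega]
  · simp [coeff_X, h]

lemma TotalDegLE.C {k : ℕ} {c : F[X]} (hc : ∀ j, k < j → c.coeff j = 0) :
    TotalDegLE k (C c : F[X][X]) := by
  intro i j hij
  by_cases h : i = 0
  · subst h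
    simpa using hc j (by omega)
  · simp [coeff_C, h]

/-- Division of `x ^ k` by a monic `H` whose total degree is its degree in `x`: the remainder
keeps total degree at most `k`. -/
lemma exists_weighted_remainder {H : F[X][X]} {n : ℕ} (hn : 1 ≤ n) (hm : H.Monic)
    (hd : H.natDegree = n) (hw : TotalDegLE n H) (k : ℕ) :
    ∃ f r : F[X][X], X ^ k = H * f + r ∧ (∀ i, n ≤ i → r.coeff i = 0) ∧ TotalDegLE k r := by
  induction k with
  | zero =>
    refine ⟨0, 1, by simp, fun i hi => ?_, TotalDegLE.one⟩
    simp [coeff_one, show i ≠ 0 by omega]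
  | succ k ih =>
    obtain ⟨f, r, he, hr, hwr⟩ := ih
    set c := r.coeff (n - 1) with hc
    refine ⟨X * f + C c, X * r - C c * H, ?_, fun i hi => ?_, ?_⟩
    · rw [pow_succ', he]; ring
    · obtain ⟨i, rfl⟩ : ∃ i', i = i' + 1 := ⟨i - 1, by omega⟩
      rw [coeff_sub, coeff_X_mul, coeff_C_mul]
      rcases Nat.eq_or_lt_of_le hi with h | h
      · have h1 : H.coeff (i + 1) = 1 := by rw [← h, ← hd]; exact hm
        have h2 : i = n - 1 := by omega
        rw [h1, hc, h2, mul_one, sub_self]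
      · rw [hr i (by omega), coeff_eq_zero_of_natDegree_lt (by omega), mul_zero, sub_zero]
    · have h1 : TotalDegLE (k + 1) (X * r) := by
        rw [add_comm k 1]; exact TotalDegLE.X.mul hwr
      refine h1.sub ?_
      by_cases hkn : n ≤ k + 1
      · have h2 : TotalDegLE (k + 1 - n) (C c : F[X][X]) :=
          TotalDegLE.C fun j hj => hwr _ _ (by omega)
        have h3 := h2.mul hw
        rwa [Nat.sub_add_cancel hkn] at h3
      · have h2 : c = 0 := by
          ext j
          exact hwr _ _ (by omega)
        intro i j _
        simp [h2]

end Weight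

/-! ### The Rédei polynomial and the nondetermined directions -/

section Directions

variable {p : ℕ} [Fact p.Prime]

/-- The Rédei polynomial of a finite point set: the product of `x - (b - a y)` over its points
`(a, b)`, as a polynomial in `x` over `GF(p)[y]`. -/
noncomputable def redei (U : Finset (ZMod p × ZMod p)) : (ZMod p)[X][X] :=
  ∏ P ∈ U, (X - C (C P.2 - C P.1 * X))

lemma redei_monic (U : Finset (ZMod p × ZMod p)) : (redei U).Monic :=
  monic_prod_of_monic _ _ fun _ _ => monic_X_sub_C _

lemma redei_natDegree (U : Finset (ZMod p × ZMod p)) : (redei U).natDegree = U.card := by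
  rw [redei, natDegree_prod_of_monic _ _ fun _ _ => monic_X_sub_C _]
  simp only [natDegree_X_sub_C, Finset.sum_const, smul_eq_mul, mul_one]

lemma redei_totalDegLE (U : Finset (ZMod p × ZMod p)) : TotalDegLE U.card (redei U) := by
  classical
  induction U using Finset.induction_on with
  | empty => simpa [redei] using TotalDegLE.one
  | insert P U hP ih =>
    rw [redei, Finset.prod_insert hP, Finset.card_insert_of_notMem hP, add_comm]
    refine TotalDegLE.mul (TotalDegLE.X.sub (TotalDegLE.C fun j hj => ?_)) ih
    simp [coeff_C, coeff_X, show j ≠ 0 by omega, show (1 : ℕ) ≠ j by omega]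

lemma redei_map (U : Finset (ZMod p × ZMod p)) (m : ZMod p) :
    (redei U).map (evalRingHom m) = ∏ P ∈ U, (X - C (P.2 - P.1 * m)) := by
  simp [redei, Polynomial.map_prod]

lemma injOn_of_notMem_dirSet {U : Finset (ZMod p × ZMod p)} {m : ZMod p}
    (hm : some m ∉ dirSet p (U : Set (ZMod p × ZMod p))) :
    Set.InjOn (fun P : ZMod p × ZMod p => P.2 - P.1 * m) U := by
  intro P hP Q hQ h
  by_contra hne
  simp only at h
  have h1 : P.1 ≠ Q.1 := by
    intro h1
    rw [h1] at h
    exact hne (Prod.ext h1 (by simpa using h))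
  refine hm ⟨P, hP, Q, hQ, hne, Or.inr ⟨h1, ?_⟩⟩
  have h2 : P.1 - Q.1 ≠ 0 := sub_ne_zero.mpr h1
  congr 1
  rw [eq_mul_inv_iff_mul_eq₀ h2]
  linear_combination -h

/-- At a nondetermined direction the specialised Rédei polynomial splits with distinct roots, so it
divides `x ^ p - x`, and the remainder of `x ^ p` is `x`. -/
lemma remainder_eq_X {U : Finset (ZMod p × ZMod p)} (hU : 2 ≤ U.card) {m : ZMod p}
    (hm : some m ∉ dirSet p (U : Set (ZMod p × ZMod p))) {f r : (ZMod p)[X][X]}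
    (he : X ^ p = redei U * f + r) (hr : ∀ i, U.card ≤ i → r.coeff i = 0) :
    r.map (evalRingHom m) = X := by
  set Hm := (redei U).map (evalRingHom m) with hHm
  have hmon : Hm.Monic := (redei_monic U).map _
  have hdeg : Hm.natDegree = U.card := by
    rw [hHm, (redei_monic U).natDegree_map, redei_natDegree]
  have hdvd : Hm ∣ X ^ p - X := by
    rw [hHm, redei_map]
    refine Finset.prod_dvd_of_coprime ?_ fun P _ => ?_
    · intro P hP Q hQ hne
      exact pairwise_coprime_X_sub_C (s := id) Function.injective_id
        fun h => hne (injOn_of_notMem_dirSet hm hP hQ h)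
    · rw [dvd_iff_isRoot]
      simp [IsRoot, ZMod.pow_card]
  have he' : X ^ p = Hm * f.map (evalRingHom m) + r.map (evalRingHom m) := by
    have := congrArg (Polynomial.map (evalRingHom m)) he
    simpa using this
  have hdvd' : Hm ∣ r.map (evalRingHom m) - X := by
    have : r.map (evalRingHom m) - X = (X ^ p - X) - Hm * f.map (evalRingHom m) := by
      rw [he']; ring
    rw [this]
    exact dvd_sub hdvd (dvd_mul_right _ _)
  refine sub_eq_zero.mp (eq_zero_of_dvd_of_degree_lt hdvd' ?_)
  rw [degree_eq_natDegree hmon.ne_zero, hdeg, degree_lt_iff_coeff_zero]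
  intro i hi
  simp [hr i hi, coeff_X, show (1 : ℕ) ≠ i by omega]

/-- The high coefficients of the remainder vanish identically in `y`: they have more roots, namely
the nondetermined directions, than their degree allows. -/
lemma remainder_coeff_eq_zero {U : Finset (ZMod p × ZMod p)} (hU : 2 ≤ U.card) (hUp : U.card < p)
    (hinf : none ∈ dirSet p (U : Set (ZMod p × ZMod p))) {f r : (ZMod p)[X][X]}
    (he : X ^ p = redei U * f + r) (hr : ∀ i, U.card ≤ i → r.coeff i = 0)
    (hw : TotalDegLE p r) {i : ℕ} (hi2 : 2 ≤ i)
    (hi : (dirSet p (U : Set (ZMod p × ZMod p))).ncard ≤ i) : r.coeff i = 0 := by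
  classical
  by_cases hiU : U.card ≤ i
  · exact hr i hiU
  set D := dirSet p (U : Set (ZMod p × ZMod p)) with hD
  set N : Finset (ZMod p) := Finset.univ.filter fun m => some m ∉ D with hN
  have hcard : p + 1 ≤ N.card + D.ncard := by
    have h1 : Dᶜ ⊆ (N.map Function.Embedding.some : Finset (Option (ZMod p))) := by
      intro d hd
      cases d with
      | none => exact absurd hinf hd
      | some m => simpa [hN] using hd
    have h2 := Set.ncard_le_ncard h1 (Finset.finite_toSet _)
    rw [Set.ncard_coe_finset, Finset.card_map] at h2
    have h3 := Set.ncard_add_ncard_compl D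
    rw [Nat.card_eq_fintype_card, Fintype.card_option, ZMod.card] at h3
    omega
  refine eq_zero_of_natDegree_lt_card_of_eval_eq_zero' _ N (fun m hm => ?_) ?_
  · have h := remainder_eq_X hU (Finset.mem_filter.mp hm).2 he hr
    have h' := congrArg (fun q => q.coeff i) h
    simpa [coeff_X, show (1 : ℕ) ≠ i by omega] using h'
  · have : (r.coeff i).natDegree ≤ p - i :=
      natDegree_le_iff_coeff_eq_zero.mpr fun j hj => hw i j (by omega)
    omega

/-! ### The lacunary polynomial at `y = 0` -/

/-- If `∏ (x - b) ^ k` over `b ∈ B` divides the lacunary polynomial `x ^ p - g`, and `|B| ≥ 2`, then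
`g` has large degree, because `∏ (x - b) ^ (k - 1)` divides the nonzero polynomial `g'`. -/
lemma lacunary_bound {B : Finset (ZMod p)} (hB : 2 ≤ B.card) {k d : ℕ} (hk : 1 ≤ k)
    {g : (ZMod p)[X]} (hgp : ∀ i, p ≤ i → g.coeff i = 0) (hgd : ∀ i, d ≤ i → g.coeff i = 0)
    (hdvd : ∏ b ∈ B, (X - C b) ^ k ∣ X ^ p - g) :
    B.card * (k - 1) + 2 ≤ d := by
  have hne : derivative g ≠ 0 := by
    intro h0
    have hconst : g = C (g.coeff 0) := by
      ext i
      rw [coeff_C]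
      split_ifs with hi
      · rw [hi]
      · by_cases hip : p ≤ i
        · exact hgp i hip
        · obtain ⟨j, rfl⟩ : ∃ j, i = j + 1 := ⟨i - 1, by omega⟩
          have h1 := congrArg (fun q => q.coeff j) h0
          simp only [coeff_derivative, coeff_zero] at h1
          refine (mul_eq_zero.mp h1).resolve_right fun h2 => ?_
          have h3 : ((j + 1 : ℕ) : ZMod p) = 0 := by exact_mod_cast h2
          rw [ZMod.natCast_eq_zero_iff] at h3
          exact hip (Nat.le_of_dvd (by omega) h3)
    have hroot : ∀ b ∈ B, b = g.coeff 0 := by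
      intro b hb
      have h1 : X - C b ∣ X ^ p - g :=
        (dvd_pow_self (X - C b) (show k ≠ 0 by omega)).trans
          ((Finset.dvd_prod_of_mem (fun b => (X - C b) ^ k) hb).trans hdvd)
      rw [dvd_iff_isRoot, IsRoot, hconst] at h1
      simpa [ZMod.pow_card, sub_eq_zero] using h1
    obtain ⟨b, hb, b', hb', hbb⟩ := Finset.one_lt_card.mp (show 1 < B.card by omega)
    exact hbb ((hroot b hb).trans (hroot b' hb').symm)
  have hdvd' : ∏ b ∈ B, (X - C b) ^ (k - 1) ∣ derivative g := by
    refine Finset.prod_dvd_of_coprime ?_ fun b hb => ?_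
    · intro b _ b' _ hbb
      exact (pairwise_coprime_X_sub_C (s := id) Function.injective_id hbb).pow
    · have h1 := pow_sub_one_dvd_derivative_of_pow_dvd
        ((Finset.dvd_prod_of_mem (fun b => (X - C b) ^ k) hb).trans hdvd)
      simpa [derivative_X_pow] using h1
  have hle := natDegree_le_of_dvd hdvd' hne
  rw [natDegree_prod_of_monic _ _ fun b _ => (monic_X_sub_C b).pow _] at hle
  simp only [natDegree_pow, natDegree_X_sub_C, mul_one, Finset.sum_const, smul_eq_mul] at hle
  have hg1 : (derivative g).natDegree + 1 < d := by
    by_contra hlt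
    refine hne (leadingCoeff_eq_zero.mp ?_)
    rw [leadingCoeff, coeff_derivative, hgd _ (by omega), zero_mul]
  omega

/-! ### Counting directions -/

lemma card_mul_sub_le_ncard_dirSet {A B : Finset (ZMod p)} (hA : 2 ≤ A.card) (hB : 2 ≤ B.card)
    (hAB : A.card * B.card < p) :
    A.card * B.card - B.card + 2 ≤ (dirSet p {P | P.1 ∈ A ∧ P.2 ∈ B}).ncard := by
  have hset : {P : ZMod p × ZMod p | P.1 ∈ A ∧ P.2 ∈ B} = ((A ×ˢ B : Finset _) : Set _) := by
    ext P; simp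
  rw [hset]
  set U := A ×ˢ B with hUdef
  have hUc : U.card = A.card * B.card := Finset.card_product _ _
  have hU2 : 2 ≤ U.card := by rw [hUc]; nlinarith
  obtain ⟨a, ha, a', ha', haa⟩ := Finset.one_lt_card.mp (show 1 < A.card by omega)
  obtain ⟨b, hb, b', hb', hbb⟩ := Finset.one_lt_card.mp (show 1 < B.card by omega)
  have hinf : none ∈ dirSet p (U : Set (ZMod p × ZMod p)) :=
    ⟨(a, b), by simp [hUdef, ha, hb], (a, b'), by simp [hUdef, ha, hb'], by simp [hbb],
      Or.inl ⟨rfl, rfl⟩⟩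
  have hzero : some 0 ∈ dirSet p (U : Set (ZMod p × ZMod p)) :=
    ⟨(a, b), by simp [hUdef, ha, hb], (a', b), by simp [hUdef, ha', hb], by simp [haa],
      Or.inr ⟨haa, by simp⟩⟩
  have hD2 : 1 < (dirSet p (U : Set (ZMod p × ZMod p))).ncard :=
    (Set.one_lt_ncard (Set.toFinite _)).mpr ⟨_, hinf, _, hzero, by simp⟩
  obtain ⟨f, r, he, hr, hw⟩ := exists_weighted_remainder (show 1 ≤ U.card by omega)
    (redei_monic U) (redei_natDegree U) (redei_totalDegLE U) p
  have hdvd : ∏ b ∈ B, (X - C b) ^ A.card ∣ X ^ p - r.map (evalRingHom 0) := by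
    have h1 : (redei U).map (evalRingHom 0) = ∏ b ∈ B, (X - C b) ^ A.card := by
      rw [redei_map, hUdef, Finset.prod_product, Finset.prod_comm]
      simp
    have h2 := congrArg (Polynomial.map (evalRingHom (0 : ZMod p))) he
    rw [Polynomial.map_add, Polynomial.map_mul, h1, Polynomial.map_pow, map_X] at h2
    rw [h2, add_sub_cancel_right]
    exact dvd_mul_right _ _
  have key := lacunary_bound hB (show 1 ≤ A.card by omega)
    (fun i hi => by rw [coeff_map, hr i (by omega), map_zero])
    (fun i hi => by
      rw [coeff_map, remainder_coeff_eq_zero hU2 (by omega) hinf he hr hw (by omega) hi, map_zero])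
    hdvd
  rwa [Nat.mul_sub, mul_one, mul_comm B.card] at key

/-- Exchanging the coordinates inverts the directions, with `0` and `∞` interchanged. -/
lemma ncard_dirSet_swap_le (A B : Finset (ZMod p)) :
    (dirSet p {P | P.1 ∈ B ∧ P.2 ∈ A}).ncard ≤ (dirSet p {P | P.1 ∈ A ∧ P.2 ∈ B}).ncard := by
  classical
  let φ : Option (ZMod p) → Option (ZMod p) := fun d =>
    d.elim (some 0) fun m => if m = 0 then none else some m⁻¹
  refine le_trans (Set.ncard_le_ncard (t := φ '' dirSet p {P | P.1 ∈ A ∧ P.2 ∈ B}) ?_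
    (Set.toFinite _)) (Set.ncard_image_le (Set.toFinite _))
  rintro d ⟨⟨b, a⟩, ⟨hb, ha⟩, ⟨b', a'⟩, ⟨hb', ha'⟩, hne, h⟩
  simp only at hb ha hb' ha' h
  by_cases haa : a = a'
  · subst haa
    have hbb : b ≠ b' := fun h => hne (by rw [h])
    refine ⟨none, ⟨(a, b), ⟨ha, hb⟩, (a, b'), ⟨ha', hb'⟩, by simp [hbb], Or.inl ⟨rfl, rfl⟩⟩, ?_⟩
    rcases h with ⟨h, _⟩ | ⟨_, h⟩
    · exact absurd h hbb
    · simp [φ, h]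
  · refine ⟨some ((b - b') * (a - a')⁻¹), ⟨(a, b), ⟨ha, hb⟩, (a', b'), ⟨ha', hb'⟩,
      by simp [haa], Or.inr ⟨haa, rfl⟩⟩, ?_⟩
    rcases h with ⟨h, hd⟩ | ⟨h, hd⟩
    · simp [φ, h, hd]
    · have h1 : (b - b') * (a - a')⁻¹ ≠ 0 :=
        mul_ne_zero (sub_ne_zero.mpr h) (inv_ne_zero (sub_ne_zero.mpr haa))
      simp only [φ, Option.elim_some, if_neg h1, hd]
      rw [mul_inv, inv_inv, mul_comm]

end Directions

/-- Theorem 1: a Cartesian product `A × B` with `|A|,|B| ≥ 2` and `|A||B| < p`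
determines at least `|A||B| - min{|A|,|B|} + 2` directions. -/
theorem directions_of_cartesian_product (p : ℕ) (hp : p.Prime)
    (A B : Finset (ZMod p)) (hA : 2 ≤ A.card) (hB : 2 ≤ B.card)
    (hAB : A.card * B.card < p) :
    A.card * B.card - min A.card B.card + 2 ≤
      (dirSet p {P | P.1 ∈ A ∧ P.2 ∈ B}).ncard := by
  have : Fact p.Prime := ⟨hp⟩
  rcases le_total B.card A.card with h | h
  · rw [min_eq_right h]
    exact card_mul_sub_le_ncard_dirSet hA hB hAB
  · rw [min_eq_left h, mul_comm]
    rw [mul_comm] at hAB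
    exact (card_mul_sub_le_ncard_dirSet hB hA hAB).trans (ncard_dirSet_swap_le A B)
end

section
/- Let p be a prime, let d be a divisor of p − 1 with d < p − 1, and let Z_d = {x ∈ GF(p) : x^d = 1} be the multiplicative subgroup of GF(p) of order d. If A ⊆ GF(p) satisfies A − A ⊆ Z_d ∪ {0}, then |A|·(|A| − 1) ≤ d. -/
/-!
The proof is Stepanov's method. Let `n = |A| ≥ 2` and let `c a = 1 / ∏_{b ≠ a} (a - b)` be the
Lagrange weights of `A`, so that `∑ c a * P(a)` is the coefficient of `X ^ (n - 1)` in `P` whenever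
`deg P < n` (`sum_weight_mul_eval`). Consider
`F = ∑ c a * (X - a) ^ (d + n - 1) - (-1) ^ (n - 1)`.

* The moments of `c` of order `< n - 1` vanish, so `F` has degree at most `d`, and its coefficient
  of `X ^ d` is `± (d + n - 1).choose d`. Since `A` is contained in a translate of `Z_d ∪ {0}`,
  `n ≤ d + 1`; as `d` is a proper divisor of `p - 1`, this gives `d + n - 1 < p`, and the
  coefficient is nonzero.
* On `A - A` the power `x ^ (d + m)` agrees with `x ^ m` for `m > 0`. Hence at `b ∈ A` the `k`-th
  derivative of `F`, for `k < n - 1`, is a multiple of `∑ c a * (b - a) ^ (n - 1 - k)`, which the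
  weights annihilate for `0 < k`; for `k = 0` it is cancelled by the constant term. So every point
  of `A` is a root of multiplicity at least `n - 1`.

Counting roots gives `n * (n - 1) ≤ deg F ≤ d`.
-/

open Polynomial in
/-- The Lagrange weights of `A` extract the coefficient of `X ^ (|A| - 1)`, that is, the divided
difference of a polynomial over `|A|` nodes. -/
lemma sum_weight_mul_eval {K : Type*} [Field K] [DecidableEq K] (A : Finset K) (P : K[X])
    (hP : P.natDegree < A.card) :
    ∑ a ∈ A, (∏ b ∈ A.erase a, (a - b))⁻¹ * P.eval a = P.coeff (A.card - 1) := by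
  have h := Lagrange.coeff_eq_sum (s := A) (v := id) (Function.injective_id.injOn) (P := P)
    (lt_of_le_of_lt degree_le_natDegree (by exact_mod_cast hP))
  rw [h]
  refine Finset.sum_congr rfl fun a _ => ?_
  simp [div_eq_mul_inv, mul_comm]

open Polynomial in
/-- `A` lies in the translate `a + (Z_d ∪ {0})` of any of its points `a`, and `Z_d` has at most
`d` elements. -/
lemma card_le_succ_of_diff {K : Type*} [Field K] [DecidableEq K] (d : ℕ) (hd : 0 < d)
    (A : Finset K) (hA : ∀ a ∈ A, ∀ b ∈ A, a - b = 0 ∨ (a - b) ^ d = 1) : A.card ≤ d + 1 := by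
  rcases A.eq_empty_or_nonempty with rfl | ⟨b, hb⟩
  · simp
  have hsub : A.image (fun a => a - b) ⊆ insert 0 (nthRoots d (1 : K)).toFinset := by
    intro x hx
    obtain ⟨a, ha, rfl⟩ := Finset.mem_image.1 hx
    rcases hA a ha b hb with h | h
    · simp [h]
    · simp [mem_nthRoots hd, h]
  calc A.card = (A.image (fun a => a - b)).card :=
        (Finset.card_image_of_injective _ (sub_left_injective)).symm
    _ ≤ _ := Finset.card_le_card hsub
    _ ≤ (nthRoots d (1 : K)).toFinset.card + 1 := Finset.card_insert_le _ _
    _ ≤ d + 1 := by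
        gcongr
        exact (Multiset.toFinset_card_le _).trans (card_nthRoots d 1)

open Polynomial in
/-- Corollary 2 (Hanson–Petridis): if `A - A ⊆ Z_d ∪ {0}`, where `Z_d` is the
multiplicative subgroup `{x : x^d = 1}` of order `d ∣ p - 1`, then `|A|(|A|-1) ≤ d`. -/
theorem card_le_of_diff_in_subgroup (p d : ℕ) (hp : p.Prime)
    (hd : d ∣ p - 1) (hdlt : d < p - 1) (A : Finset (ZMod p))
    (hA : ∀ a ∈ A, ∀ b ∈ A, a - b = 0 ∨ (a - b) ^ d = 1) :
    A.card * (A.card - 1) ≤ d := by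
  have : Fact p.Prime := ⟨hp⟩
  have hd0 : 0 < d := Nat.pos_of_dvd_of_pos hd (by omega)
  rcases Nat.lt_or_ge A.card 2 with hn | hn
  · have : A.card - 1 = 0 := by omega
    simp [this]
  have hcard := card_le_succ_of_diff d hd0 A hA
  -- A proper divisor is at most half.
  have hhalf : 2 * d ≤ p - 1 := by
    obtain ⟨k, hk⟩ := hd
    have : 2 ≤ k := by
      by_contra! h
      interval_cases k <;> omega
    nlinarith
  obtain ⟨m, hm⟩ : ∃ m, A.card = m + 1 := ⟨A.card - 1, by omega⟩
  set c : ZMod p → ZMod p := fun a => (∏ b ∈ A.erase a, (a - b))⁻¹ with hc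
  have hL : ∀ P : (ZMod p)[X], P.natDegree ≤ m → ∑ a ∈ A, c a * P.eval a = P.coeff m := by
    intro P hP
    have := sum_weight_mul_eval A P (by omega)
    rwa [show A.card - 1 = m by omega] at this
  have hneg : ∀ j ≤ m, ∑ a ∈ A, c a * (-a) ^ j = if j = m then (-1) ^ m else 0 := by
    intro j hj
    have h := hL (C ((-1) ^ j) * X ^ j) ((natDegree_C_mul_X_pow_le _ _).trans hj)
    rw [coeff_C_mul_X_pow] at h
    have e : ∀ a : ZMod p, eval a (C ((-1) ^ j) * X ^ j) = (-a) ^ j := by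
      intro a
      rw [eval_C_mul, eval_X_pow, neg_pow a]
    simp only [e] at h
    rw [h]
    by_cases hjm : j = m
    · simp [hjm]
    · simp [hjm, Ne.symm hjm]
  have hdiff : ∀ b, ∀ j ≤ m, ∑ a ∈ A, c a * (b - a) ^ j = if j = m then (-1) ^ m else 0 := by
    intro b j hj
    have hdeg : (C ((-1) ^ j) * (X - C b) ^ j : (ZMod p)[X]).natDegree ≤ j :=
      (natDegree_C_mul_le _ _).trans (by simp [natDegree_pow])
    have h := hL (C ((-1) ^ j) * (X - C b) ^ j) (hdeg.trans hj)
    have e : ∀ a : ZMod p, eval a (C ((-1) ^ j) * (X - C b) ^ j) = (b - a) ^ j := by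
      intro a
      rw [eval_C_mul, eval_pow, eval_sub, eval_X, eval_C, ← mul_pow]
      ring
    simp only [e] at h
    rw [h]
    by_cases hjm : j = m
    · subst hjm
      have := ((monic_X_sub_C b).pow j).coeff_natDegree
      rw [natDegree_pow, natDegree_X_sub_C, mul_one] at this
      rw [coeff_C_mul, this, mul_one, if_pos rfl]
    · rw [if_neg hjm]
      exact coeff_eq_zero_of_natDegree_lt (by omega)
  set F : (ZMod p)[X] := ∑ a ∈ A, C (c a) * (X - C a) ^ (d + m) - C ((-1) ^ m) with hF
  have hcoeff : ∀ j, d ≤ j → F.coeff j =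
      ((d + m).choose j : ZMod p) * ∑ a ∈ A, c a * (-a) ^ (d + m - j) := by
    intro j hj
    rw [hF, coeff_sub, coeff_C_of_ne_zero (by omega), sub_zero, finsetSum_coeff, Finset.mul_sum]
    refine Finset.sum_congr rfl fun a _ => ?_
    rw [coeff_C_mul, sub_eq_add_neg, ← C_neg, coeff_X_add_C_pow]
    ring
  have hdegF : F.natDegree ≤ d := by
    rw [natDegree_le_iff_coeff_eq_zero]
    intro j hj
    rw [hcoeff j hj.le]
    rcases Nat.lt_or_ge (d + m) j with h | h
    · simp [Nat.choose_eq_zero_of_lt h]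
    · rw [hneg _ (by omega), if_neg (by omega), mul_zero]
  have hF0 : F ≠ 0 := by
    intro h0
    have h := hcoeff d le_rfl
    rw [h0, coeff_zero, hneg _ (by omega), if_pos (by omega)] at h
    have hch : ((d + m).choose d : ZMod p) ≠ 0 := by
      rw [Ne, ZMod.natCast_eq_zero_iff]
      intro hdvd
      have h1 : p ∣ (d + m).factorial := by
        rw [← Nat.choose_mul_factorial_mul_factorial (Nat.le_add_right d m), mul_assoc]
        exact hdvd.mul_right _
      have := (hp.dvd_factorial).1 h1
      omega
    exact mul_ne_zero hch (pow_ne_zero _ (neg_ne_zero.2 one_ne_zero)) h.symm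
  have hmult : ∀ b ∈ A, m ≤ F.rootMultiplicity b := by
    intro b hb
    have key : m - 1 < F.rootMultiplicity b := by
      apply lt_rootMultiplicity_of_isRoot_iterate_derivative_of_mem_nonZeroDivisors hF0
      · intro k hk
        have hred : ∀ a ∈ A, (b - a) ^ (d + m - k) = (b - a) ^ (m - k) := by
          intro a ha
          rw [show d + m - k = d + (m - k) by omega]
          rcases hA b hb a ha with h | h
          -- The exponent `m - k` is positive, so both powers vanish at `b = a`.
          · rw [h, zero_pow (by omega), zero_pow (by omega)]
          · rw [pow_add, h, one_mul]
        have hsum : eval b (derivative^[k] (∑ a ∈ A, C (c a) * (X - C a) ^ (d + m))) =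
            ((d + m).descFactorial k : ZMod p) * ∑ a ∈ A, c a * (b - a) ^ (m - k) := by
          rw [iterate_derivative_sum, eval_finsetSum, Finset.mul_sum]
          refine Finset.sum_congr rfl fun a ha => ?_
          rw [iterate_derivative_C_mul, iterate_derivative_X_sub_pow, ← hred a ha]
          simp
          ring
        rw [IsRoot, hF, iterate_derivative_sub, eval_sub, hsum, hdiff b _ (by omega)]
        rcases Nat.eq_zero_or_pos k with rfl | hk0
        · simp
        · rw [if_neg (by omega), iterate_derivative_C hk0]
          simp
      · apply mem_nonZeroDivisors_of_ne_zero
        rw [Ne, ZMod.natCast_eq_zero_iff, hp.dvd_factorial]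
        omega
    omega
  have hroots : m • A.val ≤ F.roots := by
    rw [Multiset.le_iff_count]
    intro b
    rw [Multiset.count_nsmul, count_roots]
    by_cases hb : b ∈ A
    · rw [Multiset.count_eq_one_of_mem A.nodup hb, mul_one]
      exact hmult b hb
    · rw [Multiset.count_eq_zero_of_notMem hb]
      simp
  have h := (Multiset.card_le_card hroots).trans ((card_roots' F).trans hdegF)
  rw [Multiset.card_nsmul, Finset.card_val] at h
  rw [show A.card - 1 = m by omega, mul_comm]
  exact h
end

section
/- Let p be a prime with p ≡ 1 (mod 4). If A ⊆ GF(p) is a clique in the Paley graph G_p, i.e. for all distinct a, b ∈ A the difference a − b is a nonzero square in GF(p), then |A|·(|A| − 1) ≤ (p − 1)/2; equivalently, the clique number of G_p is at most (√(2p−1) + 1)/2. -/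
/-! The proof is the polynomial method of Stepanov, in the form used by Hanson and Petridis.
Put `d = (p - 1) / 2` and `|A| = n + 1`, and let `w a = ∏_{a' ≠ a} (a - a')⁻¹` be the Lagrange
weights of `A`. They satisfy `∑ w a (b - a) ^ m = 0` for `m < n`, and `= (-1) ^ n` for `m = n`
(`sum_weight_mul_pow`). Consider

  `f = ∑ w a (X - a) ^ (d + n) - (-1) ^ n`.

* The vanishing moments at `b = 0` kill the coefficients of `f` above degree `d`, while the
  coefficient in degree `d` is `± (d + n).choose d`, which is nonzero mod `p` since `d + n < p`.
  So `f` is nonzero of degree at most `d`.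
* For `b ∈ A` and `k < n`, the `k`-th Taylor coefficient of `f` at `b` involves
  `(b - a) ^ (d + n - k)`. By Euler's criterion `(b - a) ^ d = 1` for `a ≠ b`, so this is
  `(b - a) ^ (n - k)` (also when `a = b`, as both sides are then `0`), and the moment identities
  make the coefficient vanish. So each `b ∈ A` is a root of `f` of multiplicity at least `n`.

Counting roots, `(n + 1) n ≤ d`.
-/

open Polynomial in
/-- The moments of the Lagrange weights of `A`, obtained by reading off the coefficient of
degree `n` in the Lagrange interpolation of `(X - b) ^ m`. -/
lemma sum_weight_mul_pow {F : Type*} [Field F] [DecidableEq F] (A : Finset F) (n : ℕ)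
    (hn : A.card = n + 1) (b : F) (m : ℕ) (hm : m ≤ n) :
    ∑ a ∈ A, (∏ j ∈ A.erase a, (a - j))⁻¹ * (b - a) ^ m = if m = n then (-1) ^ n else 0 := by
  have hmon : ((X - C b : F[X]) ^ m).Monic := (monic_X_sub_C b).pow m
  have hnd : ((X - C b : F[X]) ^ m).natDegree = m := by simp
  have hdeg : ((X - C b : F[X]) ^ m).degree < A.card := by
    rw [degree_eq_natDegree hmon.ne_zero, hnd, hn]
    exact_mod_cast Nat.lt_succ_of_le hm
  have h := Lagrange.coeff_eq_sum (s := A) (v := id) Function.injective_id.injOn hdeg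
  have hsum : ∑ a ∈ A, (∏ j ∈ A.erase a, (a - j))⁻¹ * (b - a) ^ m
      = (-1) ^ m * ((X - C b : F[X]) ^ m).coeff n := by
    rw [hn, Nat.add_sub_cancel] at h
    rw [h, Finset.mul_sum]
    refine Finset.sum_congr rfl fun a _ => ?_
    rw [← neg_sub a b, neg_pow]
    simp only [id, eval_pow, eval_sub, eval_X, eval_C, div_eq_mul_inv]
    ring
  rw [hsum]
  split_ifs with hmn
  · subst hmn
    have h1 := hmon.coeff_natDegree
    rw [hnd] at h1
    rw [h1, mul_one]
  · rw [coeff_eq_zero_of_natDegree_lt (by omega), mul_zero]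

open Polynomial in
/-- A nonzero polynomial having every point of `A` as a root of multiplicity at least `n` has
degree at least `|A| n`. The multiplicities are expressed by Taylor coefficients. -/
lemma card_mul_le_natDegree {F : Type*} [Field F] (A : Finset F) (n : ℕ) (f : F[X])
    (hf : f ≠ 0) (h : ∀ b ∈ A, ∀ k < n, (f.comp (X + C b)).coeff k = 0) :
    A.card * n ≤ f.natDegree := by
  have hdvd : ∏ b ∈ A, (X - C b) ^ n ∣ f := by
    refine Finset.prod_dvd_of_coprime (fun a _ b _ hab => ?_) fun b hb => ?_
    · exact (pairwise_coprime_X_sub_C Function.injective_id hab).pow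
    · have h1 := X_pow_dvd_iff.2 (h b hb)
      have h2 := _root_.map_dvd (compRingHom (X - C b)) h1
      simpa [comp_assoc] using h2
  have h3 := natDegree_le_of_dvd hdvd hf
  rwa [natDegree_prod_of_monic _ _ fun b _ => (monic_X_sub_C b).pow n,
    Finset.sum_congr rfl fun b _ => show ((X - C b) ^ n).natDegree = n by simp,
    Finset.sum_const, smul_eq_mul] at h3

open Polynomial in
/-- If `p ≡ 1 (mod 4)` and `A` is a clique in the Paley graph `G_p` (all pairwise
differences of distinct elements are nonzero squares), then `|A|(|A|-1) ≤ (p-1)/2`. -/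
theorem paley_clique_bound (p : ℕ) (hp : p.Prime) (hp4 : p % 4 = 1)
    (A : Finset (ZMod p))
    (hA : ∀ a ∈ A, ∀ b ∈ A, a ≠ b → a - b ≠ 0 ∧ IsSquare (a - b)) :
    A.card * (A.card - 1) ≤ (p - 1) / 2 := by
  classical
  have : Fact p.Prime := ⟨hp⟩
  obtain hA0 | ⟨n, hn⟩ : A.card = 0 ∨ ∃ n, A.card = n + 1 := by
    cases A.card <;> simp
  · simp [hA0]
  rw [show A.card - 1 = n by omega]
  obtain ⟨d, hd⟩ : ∃ d, d = (p - 1) / 2 := ⟨_, rfl⟩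
  rw [← hd]
  have hp2 := hp.two_le
  have hd0 : 0 < d := by omega
  have hpow : ∀ b ∈ A, ∀ a ∈ A, b ≠ a → (b - a) ^ d = 1 := fun b hb a ha hab => by
    have h := hA b hb a ha hab
    rw [show d = p / 2 by omega]
    exact (ZMod.euler_criterion p h.1).1 h.2
  -- For `b ∈ A`, the `n` elements of `A \ {b}` are roots of `(b - X) ^ d - 1`.
  have hnd : n ≤ d := by
    obtain ⟨b, hb⟩ : A.Nonempty := Finset.card_pos.1 (by omega)
    have hsub : (A.erase b).image (fun a => b - a) ⊆ (nthRootsFinset d (1 : ZMod p)) := by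
      intro x hx
      obtain ⟨a, ha, rfl⟩ := Finset.mem_image.1 hx
      rw [mem_nthRootsFinset hd0]
      exact hpow b hb a (Finset.mem_of_mem_erase ha) (Finset.ne_of_mem_erase ha).symm
    have h1 := Finset.card_le_card hsub
    rw [Finset.card_image_of_injective _ sub_right_injective, Finset.card_erase_of_mem hb] at h1
    have h2 : (nthRootsFinset d (1 : ZMod p)).card ≤ d := by
      rw [nthRootsFinset_def]
      exact (Multiset.toFinset_card_le _).trans (card_nthRoots d 1)
    omega
  obtain ⟨w, hw⟩ : ∃ w : ZMod p → ZMod p, ∀ b m, m ≤ n →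
      ∑ a ∈ A, w a * (b - a) ^ m = if m = n then (-1) ^ n else 0 :=
    ⟨_, sum_weight_mul_pow A n hn⟩
  let f : (ZMod p)[X] := ∑ a ∈ A, C (w a) * (X + C (-a)) ^ (d + n) - C ((-1) ^ n)
  have hcoeff : ∀ k, f.coeff k = (∑ a ∈ A, w a * (0 - a) ^ (d + n - k)) * ((d + n).choose k : ℕ)
      - if k = 0 then (-1) ^ n else 0 := fun k => by
    simp only [f, coeff_sub, finsetSum_coeff, coeff_C_mul, coeff_X_add_C_pow, coeff_C, zero_sub,
      Finset.sum_mul, mul_assoc]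
  have htaylor : ∀ b k, (f.comp (X + C b)).coeff k =
      (∑ a ∈ A, w a * (b - a) ^ (d + n - k)) * ((d + n).choose k : ℕ)
      - if k = 0 then (-1) ^ n else 0 := fun b k => by
    have : f.comp (X + C b) =
        ∑ a ∈ A, C (w a) * (X + C (b - a)) ^ (d + n) - C ((-1) ^ n) := by
      simp only [f, sub_comp, Polynomial.sum_comp, mul_comp, pow_comp, add_comp, X_comp, C_comp,
        add_assoc, ← C_add, ← sub_eq_add_neg]
    simp only [this, coeff_sub, finsetSum_coeff, coeff_C_mul, coeff_X_add_C_pow, coeff_C,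
      Finset.sum_mul, mul_assoc]
  have hdeg : f.natDegree ≤ d := by
    refine natDegree_le_iff_coeff_eq_zero.2 fun k hk => ?_
    rw [hcoeff, if_neg (by omega), sub_zero]
    rcases le_or_gt k (d + n) with hk' | hk'
    · rw [hw 0 _ (by omega), if_neg (by omega), zero_mul]
    · rw [Nat.choose_eq_zero_of_lt hk', Nat.cast_zero, mul_zero]
  have hf : f ≠ 0 := by
    intro h0
    have h1 := hcoeff d
    rw [h0, coeff_zero, if_neg (by omega), sub_zero, Nat.add_sub_cancel_left, hw 0 n le_rfl,
      if_pos rfl] at h1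
    have h2 : (((d + n).choose d : ℕ) : ZMod p) = 0 :=
      (mul_eq_zero.1 h1.symm).resolve_left (pow_ne_zero _ (neg_ne_zero.2 one_ne_zero))
    rw [ZMod.natCast_eq_zero_iff] at h2
    -- A prime dividing the binomial coefficient divides `(d + n)!`, but `d + n < p`.
    have h3 : p ∣ (d + n).factorial := by
      rw [← Nat.choose_mul_factorial_mul_factorial (Nat.le_add_right d n)]
      exact Dvd.dvd.mul_right (Dvd.dvd.mul_right h2 _) _
    have := (hp.dvd_factorial).1 h3
    omega
  refine (card_mul_le_natDegree A n f hf fun b hb k hk => ?_).trans hdeg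
  have hred : ∑ a ∈ A, w a * (b - a) ^ (d + n - k) = ∑ a ∈ A, w a * (b - a) ^ (n - k) := by
    refine Finset.sum_congr rfl fun a ha => ?_
    rw [Nat.add_sub_assoc hk.le, pow_add]
    by_cases hab : b = a
    · rw [hab, sub_self, zero_pow (show n - k ≠ 0 by omega), mul_zero]
    · rw [hpow b hb a ha hab, one_mul]
  rw [htaylor, hred, hw b _ (by omega)]
  by_cases hk0 : k = 0
  · simp [hk0]
  · rw [if_neg (by omega), if_neg hk0, zero_mul, sub_zero]
end

section
/- Let p be a prime and A ⊆ GF(p) with |A| ≥ 2 and |A|² < p. Then the set of quotients {(a − b)/(c − d) : a, b, c, d ∈ A, a ≠ b, c ≠ d} has at least |A|² − |A| elements. -/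
/-!
The argument follows Rédei and Szőnyi. View `A ×ˢ A` as a set of `n = |A|²` points of the affine
plane; the quotients together with `0` are the finite directions it determines. Let `D` be this
set of directions, and let `H(X, Y) = ∏ (X - (b - Y a))`, over `(a, b) ∈ A ×ˢ A`, be the Rédei
polynomial. It is monic of degree `n` in `X` and has total degree `n`, so dividing `X ^ p` by it
leaves a remainder `r(X, Y)` of total degree at most `p` (`exists_division`).

For a slope `s ∉ D` the roots `b - s a` of `H(X, s)` are distinct, so `H(X, s)` divides `X ^ p - X`
and `r(X, s) = X`. For `j > |D|` the coefficient of `X ^ j` in `r` is a polynomial in `Y` of degree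
at most `p - j` with `p - |D| > p - j` zeros, hence vanishes: `r` has `X`-degree at most `|D|`
(`exists_lacunary`).

Setting `Y = 0` gives `∏ (X - b) ^ |A| ∣ X ^ p - ρ`, over `b ∈ A`, with `deg ρ ≤ |D|`.
Differentiating, `∏ (X - b) ^ (|A| - 1)` divides `ρ'`. If `ρ' ≠ 0` this yields
`|A| (|A| - 1) ≤ |D| - 1`, which is the claim; if `ρ' = 0` then `ρ` is constant and `X ^ p - ρ`
has a single root, contradicting `|A| ≥ 2` (`degree_lower_bound`).
-/

open Polynomial in
/-- The total degree of the bivariate polynomial `P` is at most `d`. Here the outer variable of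
`F[X][X]` is `X` and the inner one (the slope) is `Y`. -/
def TotalDegreeLE {F : Type*} [CommRing F] (d : ℕ) (P : F[X][X]) : Prop :=
  ∀ j i, d < i + j → (P.coeff j).coeff i = 0

open Polynomial in
lemma TotalDegreeLE.mul {F : Type*} [CommRing F] {d e : ℕ} {P Q : F[X][X]}
    (hP : TotalDegreeLE d P) (hQ : TotalDegreeLE e Q) : TotalDegreeLE (d + e) (P * Q) := by
  intro j i hij
  rw [coeff_mul, finsetSum_coeff]
  refine Finset.sum_eq_zero fun u hu => ?_
  rw [coeff_mul]
  refine Finset.sum_eq_zero fun v hv => ?_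
  rw [Finset.HasAntidiagonal.mem_antidiagonal] at hu hv
  rcases lt_or_ge d (v.1 + u.1) with h | h
  · rw [hP _ _ h, zero_mul]
  · rw [hQ _ _ (by omega), mul_zero]

open Polynomial in
lemma totalDegreeLE_linear {F : Type*} [CommRing F] (a b : F) :
    TotalDegreeLE 1 (X - C (C b - X * C a) : F[X][X]) := by
  intro j i hij
  rw [coeff_sub, coeff_X, coeff_C]
  rcases j with _ | _ | j
  · obtain ⟨i, rfl⟩ : ∃ k, i = k + 2 := ⟨i - 2, by omega⟩
    simp
  · obtain ⟨i, rfl⟩ : ∃ k, i = k + 1 := ⟨i - 1, by omega⟩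
    simp [coeff_one]
  · simp

open Polynomial in
lemma totalDegreeLE_prod {F : Type*} [CommRing F] (S : Finset (F × F)) :
    TotalDegreeLE S.card (∏ x ∈ S, (X - C (C x.2 - X * C x.1)) : F[X][X]) := by
  classical
  induction S using Finset.induction_on with
  | empty =>
    intro j i hij
    simp only [Finset.card_empty] at hij
    rw [Finset.prod_empty, coeff_one]
    split_ifs with h
    · rw [coeff_one, if_neg (by omega)]
    · simp
  | insert a S ha ih =>
    rw [Finset.prod_insert ha, Finset.card_insert_of_notMem ha, add_comm]
    exact (totalDegreeLE_linear _ _).mul ih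

open Polynomial in
/-- Division of `X ^ m` by an `X`-monic polynomial whose total degree equals its `X`-degree
leaves a remainder of total degree at most `m`. -/
lemma exists_division {F : Type*} [CommRing F] {n : ℕ} (hn : 1 ≤ n) {H : F[X][X]}
    (hmon : H.coeff n = 1) (hH : TotalDegreeLE n H) (hdeg : ∀ j, n < j → H.coeff j = 0) (m : ℕ) :
    ∃ q r : F[X][X], X ^ m = H * q + r ∧ (∀ j, n ≤ j → r.coeff j = 0) ∧ TotalDegreeLE m r := by
  induction m with
  | zero =>
    refine ⟨0, 1, by simp, fun j hj => ?_, fun j i hij => ?_⟩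
    · rw [coeff_one, if_neg (by omega)]
    · rw [coeff_one]
      split_ifs with h
      · rw [coeff_one, if_neg (by omega)]
      · simp
  | succ m ih =>
    obtain ⟨q, r, hq, hr, hw⟩ := ih
    -- One step of long division: cancel the leading coefficient of `r * X`.
    refine ⟨q * X + C (r.coeff (n - 1)), r * X - H * C (r.coeff (n - 1)), ?_, ?_, ?_⟩
    · rw [pow_succ, hq]; ring
    · intro j hj
      obtain ⟨j, rfl⟩ : ∃ k, j = k + 1 := ⟨j - 1, by omega⟩
      rw [coeff_sub, coeff_mul_X, coeff_mul_C]
      rcases eq_or_lt_of_le hj with h | h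
      · rw [← h, hmon, h]; simp
      · rw [hdeg _ h, hr _ (by omega)]; simp
    · intro j i hij
      rw [coeff_sub, coeff_mul_C, coeff_sub]
      have h1 : ((r * X).coeff j).coeff i = 0 := by
        rcases j with _ | j
        · simp
        · rw [coeff_mul_X]; exact hw _ _ (by omega)
      rw [h1, zero_sub, neg_eq_zero, coeff_mul]
      refine Finset.sum_eq_zero fun v hv => ?_
      rw [Finset.HasAntidiagonal.mem_antidiagonal] at hv
      rcases lt_or_ge n (v.1 + j) with h | h
      · rw [hH _ _ h, zero_mul]
      · rw [hw _ _ (by omega), mul_zero]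

open Polynomial in
/-- If `D` contains every direction determined by the points `A ×ˢ A`, then some polynomial
`ρ` of degree less than `|A|²` and at most `|D|` makes `X ^ p - ρ` divisible by
`∏ b ∈ A, (X - b) ^ |A|`, the Rédei polynomial of `A ×ˢ A` at slope `0`. -/
lemma exists_lacunary (p : ℕ) [Fact p.Prime] (A : Finset (ZMod p)) (hA : 2 ≤ A.card)
    (D : Finset (ZMod p)) (hD1 : 1 ≤ D.card)
    (hD : ∀ s, s ∉ D → Set.InjOn (fun x : ZMod p × ZMod p => x.2 - s * x.1) (A ×ˢ A : Finset _)) :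
    ∃ ρ : (ZMod p)[X], ρ.natDegree ≤ D.card ∧ (∀ j, A.card ^ 2 ≤ j → ρ.coeff j = 0) ∧
      (∏ b ∈ A, (X - C b) ^ A.card) ∣ X ^ p - ρ := by
  classical
  set n := (A ×ˢ A).card with hn
  have hnA : n = A.card ^ 2 := by rw [hn, Finset.card_product, sq]
  have hn4 : 4 ≤ n := by rw [hnA]; nlinarith
  set H : (ZMod p)[X][X] := ∏ x ∈ A ×ˢ A, (X - C (C x.2 - X * C x.1)) with hH
  have hHdeg : H.natDegree = n := natDegree_finsetProd_X_sub_C_eq_card _ _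
  have hHmon : H.Monic := monic_prod_of_monic _ _ fun _ _ => monic_X_sub_C _
  have hHmap : ∀ s, H.map (evalRingHom s) = ∏ x ∈ A ×ˢ A, (X - C (x.2 - s * x.1)) := by
    intro s
    rw [hH, Polynomial.map_prod]
    refine Finset.prod_congr rfl fun x _ => ?_
    simp
    exact mul_comm _ _
  obtain ⟨q, r, hq, hr, hw⟩ := exists_division (n := n) (by omega)
    (by rw [← hHdeg]; exact hHmon) (totalDegreeLE_prod _)
    (fun j hj => coeff_eq_zero_of_natDegree_lt (hHdeg ▸ hj)) p
  have hqs : ∀ s, (X : (ZMod p)[X]) ^ p =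
      (∏ x ∈ A ×ˢ A, (X - C (x.2 - s * x.1))) * q.map (evalRingHom s)
        + r.map (evalRingHom s) := by
    intro s
    rw [← hHmap, ← Polynomial.map_mul, ← Polynomial.map_add, ← hq]
    simp
  -- At a slope outside `D` the Rédei polynomial has distinct roots, so it divides `X ^ p - X`.
  have hrs : ∀ s, s ∉ D → r.map (evalRingHom s) = X := by
    intro s hs
    rw [← sub_eq_zero]
    by_contra hne
    have hprod : (∏ u ∈ (A ×ˢ A).image (fun x => x.2 - s * x.1), (X - C u)) =
        ∏ x ∈ A ×ˢ A, (X - C (x.2 - s * x.1)) :=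
      Finset.prod_image (f := fun u => X - C u) (hD s hs)
    apply hne
    refine eq_zero_of_natDegree_lt_card_of_eval_eq_zero' _
      ((A ×ˢ A).image (fun x => x.2 - s * x.1)) (fun u hu => ?_) ?_
    · have h1 := congrArg (eval u) (hqs s)
      rw [← hprod, eval_add, eval_mul, eval_prod, Finset.prod_eq_zero hu (by simp), zero_mul,
        zero_add, eval_pow, eval_X, ZMod.pow_card] at h1
      rw [eval_sub, eval_X, ← h1, sub_self]
    · rw [Finset.card_image_of_injOn (hD s hs), ← hn]
      refine lt_of_le_of_lt (b := n - 1) (natDegree_le_iff_coeff_eq_zero.2 fun j hj => ?_)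
        (by omega)
      rw [coeff_sub, coeff_map, hr _ (by omega), coeff_X, if_neg (by omega)]
      simp
  -- The coefficient of `X ^ j` in `r` has degree at most `p - j` and vanishes at the
  -- `p - |D|` slopes outside `D`.
  have hrz : ∀ j, D.card < j → r.coeff j = 0 := by
    intro j hj
    have hDc : D.card + Dᶜ.card = p := by
      rw [Finset.card_add_card_compl, ZMod.card]
    rcases lt_or_ge p j with hpj | hpj
    · ext i
      rw [hw _ _ (by omega), coeff_zero]
    refine eq_zero_of_natDegree_lt_card_of_eval_eq_zero' _ Dᶜ (fun s hs => ?_) ?_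
    · have h1 := congrArg (fun P => coeff P j) (hrs s (Finset.mem_compl.1 hs))
      simp only [coeff_map, coe_evalRingHom] at h1
      rw [h1, coeff_X, if_neg (by omega)]
    · refine lt_of_le_of_lt (b := p - j) (natDegree_le_iff_coeff_eq_zero.2 fun i hi => ?_)
        (by omega)
      exact hw _ _ (by omega)
  refine ⟨r.map (evalRingHom 0), ?_, fun j hj => ?_, q.map (evalRingHom 0), ?_⟩
  · refine natDegree_le_iff_coeff_eq_zero.2 fun j hj => ?_
    rw [coeff_map, hrz j hj, map_zero]
  · rw [coeff_map, hr j (by omega), map_zero]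
  · rw [hqs 0, add_sub_cancel_right, Finset.prod_product]
    congr 1
    simp only [zero_mul, sub_zero]
    rw [Finset.prod_const, Finset.prod_pow]

open Polynomial in
/-- A lacunary polynomial `X ^ p - ρ` with `|A| ≥ 2` distinct roots of multiplicity at least `|A|`
forces `ρ` to have large degree: its derivative `-ρ'` has all of these roots with multiplicity
`|A| - 1`. -/
lemma degree_lower_bound (p : ℕ) [Fact p.Prime] (A : Finset (ZMod p)) (hA : 2 ≤ A.card)
    (hA2 : A.card ^ 2 < p) (ρ : (ZMod p)[X]) (hρ : ∀ j, A.card ^ 2 ≤ j → ρ.coeff j = 0)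
    (hdvd : (∏ b ∈ A, (X - C b) ^ A.card) ∣ X ^ p - ρ) :
    A.card ^ 2 - A.card + 1 ≤ ρ.natDegree := by
  have hb : ∀ b ∈ A, (X - C b) ^ A.card ∣ X ^ p - ρ := fun b hb =>
    (Finset.dvd_prod_of_mem (fun b => (X - C b) ^ A.card) hb).trans hdvd
  have hder : derivative (X ^ p - ρ) = -derivative ρ := by
    rw [derivative_sub, derivative_X_pow]; simp
  have hpd : (∏ b ∈ A, (X - C b) ^ (A.card - 1)) ∣ derivative ρ := by
    refine Finset.prod_dvd_of_coprime (fun a _ b _ hab => ?_) fun b hbA => ?_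
    · exact (isCoprime_X_sub_C_of_isUnit_sub (sub_ne_zero.2 hab).isUnit).pow
    · have := pow_sub_one_dvd_derivative_of_pow_dvd (hb b hbA)
      rwa [hder, dvd_neg] at this
  by_cases h0 : derivative ρ = 0
  · -- Here `ρ` is a constant, so `X ^ p - ρ` is a `p`-th power with a single root.
    exfalso
    have hc : ρ = C (ρ.coeff 0) := by
      ext j
      rcases j with _ | j
      · simp
      rw [coeff_C_succ]
      rcases le_or_gt (A.card ^ 2) (j + 1) with h | h
      · exact hρ _ h
      have h1 := congrArg (fun P => coeff P j) h0
      simp only [coeff_derivative, coeff_zero] at h1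
      refine (mul_eq_zero.1 h1).resolve_right fun h2 => ?_
      have h3 : ((j + 1 : ℕ) : ZMod p) = 0 := by exact_mod_cast h2
      rw [ZMod.natCast_eq_zero_iff] at h3
      have := Nat.le_of_dvd (by omega) h3
      omega
    have hroot : ∀ b ∈ A, b = ρ.coeff 0 := by
      intro b hbA
      have h1 : (X - C b) ∣ X ^ p - ρ := (dvd_pow_self _ (by omega)).trans (hb b hbA)
      rw [dvd_iff_isRoot, IsRoot, hc] at h1
      simp only [eval_sub, eval_pow, eval_X, eval_C, ZMod.pow_card] at h1
      exact sub_eq_zero.1 h1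
    obtain ⟨a, ha, b, hbA, hab⟩ := Finset.one_lt_card.1 (by omega : 1 < A.card)
    exact hab ((hroot a ha).trans (hroot b hbA).symm)
  · have h1 := natDegree_le_of_dvd hpd h0
    rw [natDegree_prod_of_monic _ _ fun b _ => (monic_X_sub_C b).pow _] at h1
    simp only [natDegree_pow, natDegree_X_sub_C, mul_one, Finset.sum_const, smul_eq_mul] at h1
    rw [Nat.mul_sub, mul_one, ← sq] at h1
    have h2 : ρ.natDegree ≠ 0 := fun h => h0 (derivative_of_natDegree_zero h)
    have := natDegree_derivative_lt h2
    omega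

/-- If `|A| ≥ 2` and `|A|² < p`, the quotient set `(A-A)/(A-A)` (with nonzero
denominators and numerators) has at least `|A|² - |A|` elements. -/
theorem quotient_set_lower_bound (p : ℕ) (hp : p.Prime) (A : Finset (ZMod p))
    (hA : 2 ≤ A.card) (hA2 : A.card ^ 2 < p) :
    A.card ^ 2 - A.card ≤
      {x : ZMod p | ∃ a ∈ A, ∃ b ∈ A, ∃ c ∈ A, ∃ d ∈ A,
        a ≠ b ∧ c ≠ d ∧ x = (a - b) * (c - d)⁻¹}.ncard := by
  classical
  have : Fact p.Prime := ⟨hp⟩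
  set Q := {x : ZMod p | ∃ a ∈ A, ∃ b ∈ A, ∃ c ∈ A, ∃ d ∈ A,
        a ≠ b ∧ c ≠ d ∧ x = (a - b) * (c - d)⁻¹} with hQ
  -- The slope `0` is also a direction determined by `A ×ˢ A`.
  set D : Finset (ZMod p) := insert 0 Q.toFinset with hDdef
  have hDcard : D.card ≤ Q.ncard + 1 := by
    rw [Set.ncard_eq_toFinset_card']
    exact Finset.card_insert_le _ _
  have hD1 : 1 ≤ D.card := Finset.card_pos.2 ⟨0, Finset.mem_insert_self _ _⟩
  obtain ⟨ρ, h1, h2, h3⟩ := exists_lacunary p A hA D hD1 (by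
    rintro s hs ⟨a, b⟩ hx ⟨c, d⟩ hy hxy
    simp only [Finset.coe_product, Set.mem_prod, Finset.mem_coe] at hx hy
    simp only at hxy
    rw [hDdef, Finset.mem_insert, Set.mem_toFinset, not_or] at hs
    have hmul : b - d = s * (a - c) := by linear_combination hxy
    by_cases hac : a = c
    · subst hac
      rw [sub_self, mul_zero, sub_eq_zero] at hmul
      rw [hmul]
    · have hac' : a - c ≠ 0 := sub_ne_zero.2 hac
      refine absurd ⟨b, hx.2, d, hy.2, a, hx.1, c, hy.1, fun hbd => ?_, hac, ?_⟩ hs.2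
      · rw [hbd, sub_self] at hmul
        exact (mul_ne_zero hs.1 hac') hmul.symm
      · rw [hmul, mul_assoc, mul_inv_cancel₀ hac', mul_one])
  have := degree_lower_bound p A hA hA2 ρ h2 h3
  omega
end

section
/- Let p be an odd prime and let A, B ⊆ GF(p) be disjoint sets each of size at least two. Suppose that each of the three difference sets A − A, A − B, B − B has the property that its nonzero elements are either all squares in GF(p) or all non-squares in GF(p). Then min{|A|² − 2|A|, |B|² − 2|B|} + |A|·|B| + 2 ≤ (p + 3)/2. -/
/-!
Write `d = (p - 1) / 2`, so that `x ^ d = ±1` tells squares from non-squares, and let `σ_AA`,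
`σ_AB`, `σ_BB` be the constant values of `x ^ d` on the nonzero differences. Since `A - A` is
symmetric, `(-1) ^ d = 1`, so `σ_AB` also governs `B - A`. Two of the three signs agree, and in each
case Stepanov's method applies: for a set `S` of `n` shifts, let `c_s = ∏_{t ∈ S, t ≠ s} (s - t)⁻¹`
be the divided-difference weights, so that `∑ c_s Q(s)` is the coefficient of degree `n - 1` of any
`Q` of degree less than `n` (`sum_weight_mul_sub_pow`). With suitable signs `ε_s`, the polynomial
`G = ∑ ε_s c_s (X - s) ^ (d + n - 1)` agrees, together with its low-order derivatives, with a
constant at every point `x` for which `ε_s (x - s) ^ d` does not depend on `s`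
(`eval_iterate_derivative_auxPoly`). Counting zeros with multiplicity then bounds `n`.

* If `σ_AA = σ_AB`, take `S = A` and `ε = 1`. The polynomial `G - const` has degree at most `d` and
  vanishes to order `|A| - 1` on `A` and `|A|` on `B`, so `|A| (|A| - 1) + |A| |B| ≤ d`
  (`card_bound_of_pow_eq`). The case `σ_AB = σ_BB` is symmetric.
* If `σ_AA = σ_BB = -σ_AB`, take `S ⊆ A ∪ B` and `ε = 1` on `A`, `ε = -1` on `B`. Now `G'` vanishes
  to order `n - 2` on all of `S`, which gives `n (n - 2) ≤ d + n - 2`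
  (`card_bound_of_twisted_pow_eq`). Taking `S = A ∪ B` yields more than the required inequality.
-/


/-- The nonzero elements of a set `D ⊆ GF(p)` are all squares or all non-squares. -/
def UniformQuadraticCharacter (p : ℕ) (D : Set (ZMod p)) : Prop :=
  (∀ x ∈ D, x ≠ 0 → IsSquare x) ∨ (∀ x ∈ D, x ≠ 0 → ¬ IsSquare x)

lemma zmod_three_neg_one_pow_ne : (-1 : ZMod 3) ^ 1 ≠ 1 := by decide

lemma zmod_five_two_ne_zero : (2 : ZMod 5) ≠ 0 := by decide

section Stepanov

open Polynomial

variable {p : ℕ} [Fact p.Prime]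

lemma coeff_X_sub_C_pow (r : ZMod p) (n k : ℕ) :
    ((X - C r) ^ n).coeff k = (-r) ^ (n - k) * (n.choose k : ZMod p) := by
  rw [sub_eq_add_neg, ← C_neg, coeff_X_add_C_pow]

/-- A nonzero polynomial vanishing to order `m x` at each `x ∈ T`, in the sense of derivatives, has
degree at least `∑ m x`. The bound `m x ≤ p` makes derivatives detect multiplicities. -/
lemma sum_le_natDegree_of_iterate_derivative (f : (ZMod p)[X]) (hf : f ≠ 0)
    (T : Finset (ZMod p)) (m : ZMod p → ℕ) (hm : ∀ x ∈ T, m x ≤ p)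
    (h : ∀ x ∈ T, ∀ j < m x, (derivative^[j] f).eval x = 0) :
    ∑ x ∈ T, m x ≤ f.natDegree := by
  have hdvd : (∏ x ∈ T, (X - C x) ^ m x) ∣ f := by
    apply Finset.prod_dvd_of_coprime
    · intro x _ y _ hxy
      exact (pairwise_coprime_X_sub_C Function.injective_id hxy).pow
    · intro x hx
      rcases Nat.eq_zero_or_pos (m x) with h0 | h0
      · simp [h0]
      rw [← le_rootMultiplicity_iff hf]
      have : m x - 1 < f.rootMultiplicity x := by
        apply lt_rootMultiplicity_of_isRoot_iterate_derivative_of_mem_nonZeroDivisors hf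
        · intro j hj
          exact h x hx j (by omega)
        · apply mem_nonZeroDivisors_of_ne_zero
          intro h1
          rw [ZMod.natCast_eq_zero_iff, (Fact.out : p.Prime).dvd_factorial] at h1
          have := hm x hx
          omega
      omega
  have h1 := natDegree_le_of_dvd hdvd hf
  rw [natDegree_prod_of_monic _ _ (fun x _ => (monic_X_sub_C x).pow _)] at h1
  simpa using h1

/-- The divided-difference weight of the node `s` of `S`. -/
noncomputable def weight (S : Finset (ZMod p)) (s : ZMod p) : ZMod p :=
  (∏ t ∈ S.erase s, (s - t))⁻¹

lemma weight_ne_zero (S : Finset (ZMod p)) (s : ZMod p) : weight S s ≠ 0 := by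
  refine inv_ne_zero (Finset.prod_ne_zero_iff.2 fun t ht => ?_)
  exact sub_ne_zero.2 (Finset.ne_of_mem_erase ht).symm

lemma sum_weight_mul_sub_pow (S : Finset (ZMod p)) (x : ZMod p) (j : ℕ)
    (hj : j < S.card) :
    ∑ s ∈ S, weight S s * (x - s) ^ j = if j + 1 = S.card then (-1) ^ j else 0 := by
  have hdeg : ((C x - X) ^ j : (ZMod p)[X]).natDegree ≤ j := by
    refine natDegree_pow_le.trans ?_
    have : (C x - X : (ZMod p)[X]).natDegree ≤ 1 := by
      refine (natDegree_sub_le _ _).trans ?_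
      simp
    nlinarith
  have h := Lagrange.coeff_eq_sum (s := S) (v := id) (Function.injective_id.injOn)
    (P := (C x - X) ^ j)
    (lt_of_le_of_lt degree_le_natDegree (by exact_mod_cast lt_of_le_of_lt hdeg hj))
  simp only [id, eval_pow, eval_sub, eval_C, eval_X] at h
  have h2 : ∑ s ∈ S, weight S s * (x - s) ^ j = ((C x - X) ^ j : (ZMod p)[X]).coeff (S.card - 1) := by
    rw [h]
    refine Finset.sum_congr rfl fun s _ => ?_
    rw [weight, div_eq_mul_inv, mul_comm]
  rw [h2]
  split_ifs with hjs
  · have e : (C x - X : (ZMod p)[X]) = C (-1) * (X - C x) := by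
      simp
    rw [← hjs, Nat.add_sub_cancel, e, mul_pow, ← C_pow, coeff_C_mul, coeff_X_sub_C_pow]
    simp
  · exact coeff_eq_zero_of_natDegree_lt (by omega)

/-- The powers `(X - s) ^ N`, `s ∈ S`, are linearly independent if `|S| - 1 ≤ N < p`. The
binomial coefficients `N.choose j` are then invertible, so comparing coefficients in a vanishing
combination gives `∑ w_s s ^ j = 0` for `j ≤ N`, and testing against the Lagrange basis gives
`w_s = 0`. -/
lemma eq_zero_of_sum_mul_X_sub_C_pow (S : Finset (ZMod p)) (w : ZMod p → ZMod p) (N : ℕ)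
    (hN : N < p) (hS : S.card ≤ N + 1)
    (h : ∑ s ∈ S, C (w s) * (X - C s) ^ N = 0) : ∀ s ∈ S, w s = 0 := by
  have hmom : ∀ j ≤ N, ∑ s ∈ S, w s * s ^ j = 0 := by
    intro j hj
    have h1 : ((∑ s ∈ S, C (w s) * (X - C s) ^ N : (ZMod p)[X])).coeff (N - j) = 0 := by
      rw [h, coeff_zero]
    simp only [finsetSum_coeff, coeff_C_mul, coeff_X_sub_C_pow] at h1
    have hb : ((N.choose (N - j) : ℕ) : ZMod p) ≠ 0 := by
      rw [Ne, ZMod.natCast_eq_zero_iff]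
      intro hd
      have h3 : p ∣ N.factorial := by
        rw [← Nat.choose_mul_factorial_mul_factorial (Nat.sub_le N j), mul_assoc]
        exact hd.mul_right _
      rw [(Fact.out : p.Prime).dvd_factorial] at h3
      omega
    have hc : ((-1) ^ j * (N.choose (N - j) : ZMod p)) * ∑ s ∈ S, w s * s ^ j = 0 := by
      rw [← h1, Finset.mul_sum]
      refine Finset.sum_congr rfl fun s _ => ?_
      rw [Nat.sub_sub_self hj, neg_pow s]
      ring
    exact (mul_eq_zero.1 hc).resolve_left (mul_ne_zero (pow_ne_zero _ (by simp)) hb)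
  have hpoly : ∀ Q : (ZMod p)[X], Q.natDegree ≤ N → ∑ s ∈ S, w s * Q.eval s = 0 := by
    intro Q hQ
    simp only [eval_eq_sum_range, Finset.mul_sum]
    rw [Finset.sum_comm]
    refine Finset.sum_eq_zero fun j hj => ?_
    have := hmom j (by have := Finset.mem_range.1 hj; omega)
    calc ∑ s ∈ S, w s * (Q.coeff j * s ^ j) = Q.coeff j * ∑ s ∈ S, w s * s ^ j := by
          rw [Finset.mul_sum]; exact Finset.sum_congr rfl fun s _ => by ring
      _ = 0 := by rw [this, mul_zero]
  intro s hs
  have hdeg : (Lagrange.basis S id s).natDegree ≤ N := by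
    have := Lagrange.degree_basis (s := S) (v := id) Function.injective_id.injOn hs
    rw [natDegree_eq_of_degree_eq_some this]
    omega
  have h2 := hpoly _ hdeg
  rw [Finset.sum_eq_single_of_mem s hs] at h2
  · have e := Lagrange.eval_basis_self (s := S) (v := id) Function.injective_id.injOn hs
    simp only [id] at e
    rw [e, mul_one] at h2
    exact h2
  · intro t ht hts
    have e := Lagrange.eval_basis_of_ne (s := S) (v := id) hts.symm ht
    simp only [id] at e
    rw [e, mul_zero]

/-- The auxiliary polynomial `∑ ε_s c_s (X - s) ^ N` of Stepanov's method. -/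
noncomputable def auxPoly (S : Finset (ZMod p)) (ε : ZMod p → ZMod p) (N : ℕ) : (ZMod p)[X] :=
  ∑ s ∈ S, C (ε s * weight S s) * (X - C s) ^ N

lemma iterate_derivative_auxPoly (S : Finset (ZMod p)) (ε : ZMod p → ZMod p) (N j : ℕ) :
    derivative^[j] (auxPoly S ε N) = C (N.descFactorial j : ZMod p) * auxPoly S ε (N - j) := by
  rw [auxPoly, auxPoly, iterate_derivative_sum, Finset.mul_sum]
  refine Finset.sum_congr rfl fun s _ => ?_
  rw [iterate_derivative_C_mul, iterate_derivative_X_sub_pow, nsmul_eq_mul, C_eq_natCast]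
  ring

lemma derivative_auxPoly_ne_zero (S : Finset (ZMod p)) (hS : S.Nonempty) (ε : ZMod p → ZMod p)
    (hε : ∀ s ∈ S, ε s ≠ 0) (N : ℕ) (hN : N < p) (hSN : S.card ≤ N) :
    derivative (auxPoly S ε N) ≠ 0 := by
  have h := iterate_derivative_auxPoly S ε N 1
  have hpos := hS.card_pos
  simp only [Function.iterate_one, Nat.descFactorial_one] at h
  rw [h]
  refine mul_ne_zero (C_ne_zero.2 ?_) ?_
  · rw [Ne, ZMod.natCast_eq_zero_iff]
    exact Nat.not_dvd_of_pos_of_lt (by omega) hN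
  · intro h0
    obtain ⟨s, hs⟩ := hS
    exact mul_ne_zero (hε s hs) (weight_ne_zero S s)
      (eq_zero_of_sum_mul_X_sub_C_pow S _ (N - 1) (by omega) (by omega) h0 s hs)

/-- If `ε_s (x - s) ^ d` takes a constant value `η` over the `s ∈ S` with `s ≠ x`, then the `j`-th
derivative of the auxiliary polynomial at `x` reduces to the divided difference of a polynomial of
degree `|S| - 1 - j`. When `x ∈ S`, the term `s = x` is harmless as long as this degree is
positive. -/
lemma eval_iterate_derivative_auxPoly (S : Finset (ZMod p)) (ε : ZMod p → ZMod p) (d j : ℕ)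
    (x η : ZMod p) (hx : ∀ s ∈ S, s ≠ x → ε s * (x - s) ^ d = η)
    (hj : j + 1 ≤ S.card) (hjx : x ∈ S → j + 2 ≤ S.card) :
    (derivative^[j] (auxPoly S ε (d + S.card - 1))).eval x =
      if j = 0 then η * (-1) ^ (S.card - 1) else 0 := by
  have key : (auxPoly S ε (d + S.card - 1 - j)).eval x =
      η * ∑ s ∈ S, weight S s * (x - s) ^ (S.card - 1 - j) := by
    rw [auxPoly, eval_finsetSum, Finset.mul_sum]
    refine Finset.sum_congr rfl fun s hs => ?_
    simp only [eval_mul, eval_C, eval_pow, eval_sub, eval_X]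
    have e : d + S.card - 1 - j = d + (S.card - 1 - j) := by omega
    rw [e]
    by_cases hsx : s = x
    · have := hjx (hsx ▸ hs)
      have h0 : S.card - 1 - j ≠ 0 := by omega
      rw [hsx, sub_self, zero_pow h0, zero_pow (by omega)]
      simp
    · rw [← hx s hs hsx, pow_add]
      ring
  rw [iterate_derivative_auxPoly, eval_mul, eval_C, key,
    sum_weight_mul_sub_pow S x _ (by omega)]
  by_cases h0 : j = 0
  · subst h0
    rw [if_pos (by omega), if_pos rfl]
    simp
  · rw [if_neg (by omega), if_neg h0]
    simp

/-- The cancelling moments of the weights reduce the degree from `d + |S| - 1` to `d`. -/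
lemma natDegree_auxPoly_one_le (S : Finset (ZMod p)) (d : ℕ) :
    (auxPoly S (fun _ => 1) (d + S.card - 1)).natDegree ≤ d := by
  rw [natDegree_le_iff_coeff_eq_zero]
  intro i hi
  rw [auxPoly, finsetSum_coeff]
  simp only [one_mul, coeff_C_mul, coeff_X_sub_C_pow]
  by_cases hiN : i ≤ d + S.card - 1
  · have h := sum_weight_mul_sub_pow S 0 (d + S.card - 1 - i) (by omega)
    rw [if_neg (by omega)] at h
    simp only [zero_sub] at h
    simp only [← mul_assoc]
    rw [← Finset.sum_mul, h, zero_mul]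
  · rw [Nat.choose_eq_zero_of_lt (by omega)]
    simp

/-- Stepanov's bound when all differences from `A` to `A ∪ B` have the same quadratic
character `σ`. -/
lemma card_bound_of_pow_eq (d : ℕ) (hd : p = 2 * d + 1) (A B : Finset (ZMod p))
    (hdisj : Disjoint A B) (hA : 2 ≤ A.card) (σ : ZMod p)
    (hAA : ∀ x ∈ A, ∀ s ∈ A, s ≠ x → (x - s) ^ d = σ)
    (hBA : ∀ x ∈ B, ∀ s ∈ A, (x - s) ^ d = σ) :
    A.card * (A.card - 1) + B.card * A.card ≤ d := by
  have hp := (Fact.out : p.Prime).two_le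
  have hne : A.Nonempty := Finset.card_pos.1 (by omega)
  -- The translate of `A \ {a}` by `-a` consists of roots of `X ^ d - σ`.
  have hAd : A.card - 1 ≤ d := by
    obtain ⟨a, ha⟩ := hne
    have hsub : (A.erase a).card ≤ (nthRoots d σ).card := by
      have h1 : ((A.erase a).image (fun x => x - a)).card = (A.erase a).card :=
        Finset.card_image_of_injective _ sub_left_injective
      rw [← h1]
      have h2 : ((A.erase a).image (fun x => x - a)) ⊆ (nthRoots d σ).toFinset := by
        intro y hy
        obtain ⟨x, hx, rfl⟩ := Finset.mem_image.1 hy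
        rw [Multiset.mem_toFinset, mem_nthRoots (by omega)]
        exact hAA x (Finset.mem_of_mem_erase hx) a ha (Finset.ne_of_mem_erase hx).symm
      exact (Finset.card_le_card h2).trans (Multiset.toFinset_card_le _)
    rw [Finset.card_erase_of_mem ha] at hsub
    exact hsub.trans (card_nthRoots d σ)
  have hd0 : 1 ≤ d := by omega
  set N := d + A.card - 1 with hN
  set f := auxPoly A (fun _ => 1) N - C (σ * (-1) ^ (A.card - 1)) with hf
  have hf0 : f ≠ 0 := by
    intro h0
    apply derivative_auxPoly_ne_zero A hne (fun _ => 1) (by simp) N (by omega) (by omega)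
    have := congrArg derivative h0
    rwa [hf, derivative_sub, derivative_C, sub_zero, derivative_zero] at this
  have hev : ∀ x j, (∀ s ∈ A, s ≠ x → (x - s) ^ d = σ) → j + 1 ≤ A.card →
      (x ∈ A → j + 2 ≤ A.card) → (derivative^[j] f).eval x = 0 := by
    intro x j h1 h2 h3
    have h4 := eval_iterate_derivative_auxPoly A (fun _ => 1) d j x σ (by simpa using h1) h2 h3
    rw [hf, iterate_derivative_sub, eval_sub, h4]
    rcases j with _ | j
    · simp
    · rw [iterate_derivative_C (Nat.succ_pos j)]
      simp
  have hsum := sum_le_natDegree_of_iterate_derivative f hf0 (A ∪ B)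
    (fun x => if x ∈ A then A.card - 1 else A.card)
    (by intro x _; split_ifs <;> omega)
    (by
      intro x hx j hj
      split_ifs at hj with hxA
      · exact hev x j (hAA x hxA) (by omega) (fun _ => by omega)
      · have hxB : x ∈ B := (Finset.mem_union.1 hx).resolve_left hxA
        exact hev x j (fun s hs _ => hBA x hxB s hs) (by omega) (fun h => absurd h hxA))
  have hdeg : f.natDegree ≤ d := by
    refine (natDegree_sub_le _ _).trans ?_
    rw [natDegree_C]
    exact max_le (natDegree_auxPoly_one_le A d) (Nat.zero_le _)
  rw [Finset.sum_union hdisj, Finset.sum_congr rfl (g := fun _ => A.card - 1)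
    (fun x hx => if_pos hx), Finset.sum_congr (s₁ := B) rfl (g := fun _ => A.card)
    (fun x hx => if_neg (Finset.disjoint_right.1 hdisj hx))] at hsum
  simp only [Finset.sum_const, smul_eq_mul] at hsum
  exact hsum.trans hdeg

/-- Stepanov's bound when the quadratic character of `x - s` is `σ ε_x / ε_s` on `S`. -/
lemma card_bound_of_twisted_pow_eq (d : ℕ) (hd : p = 2 * d + 1) (S : Finset (ZMod p))
    (hS : 2 ≤ S.card) (hSd : S.card ≤ d + 1) (σ : ZMod p) (ε : ZMod p → ZMod p)
    (hε : ∀ s ∈ S, ε s ≠ 0)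
    (h : ∀ x ∈ S, ∀ s ∈ S, s ≠ x → ε s * (x - s) ^ d = σ * ε x) :
    S.card * (S.card - 2) ≤ d + S.card - 2 := by
  have hne : S.Nonempty := Finset.card_pos.1 (by omega)
  have hf0 := derivative_auxPoly_ne_zero S hne ε hε (d + S.card - 1) (by omega) (by omega)
  have hsum := sum_le_natDegree_of_iterate_derivative _ hf0 S (fun _ => S.card - 2)
    (by intro x _; omega)
    (by
      intro x hx j hj
      rw [← Function.iterate_succ_apply,
        eval_iterate_derivative_auxPoly S ε d (j + 1) x (σ * ε x) (h x hx) (by omega)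
          (fun _ => by omega), if_neg (by omega)])
  have hdeg : (auxPoly S ε (d + S.card - 1)).natDegree ≤ d + S.card - 1 := by
    refine natDegree_sum_le_of_forall_le _ _ fun s _ => ?_
    refine (natDegree_C_mul_le _ _).trans (natDegree_pow_le.trans ?_)
    simp
  have := natDegree_derivative_le (auxPoly S ε (d + S.card - 1))
  simp only [Finset.sum_const, smul_eq_mul] at hsum
  omega

/-- Euler's criterion turns a uniform quadratic character into a constant value of `x ^ (p / 2)`. -/
lemma UniformQuadraticCharacter.exists_pow_eq {D : Set (ZMod p)}
    (h : UniformQuadraticCharacter p D) :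
    ∃ σ : ZMod p, (σ = 1 ∨ σ = -1) ∧ ∀ x ∈ D, x ≠ 0 → x ^ (p / 2) = σ := by
  rcases h with h | h
  · exact ⟨1, Or.inl rfl, fun x hx h0 => (ZMod.euler_criterion p h0).1 (h x hx h0)⟩
  · exact ⟨-1, Or.inr rfl, fun x hx h0 =>
      (ZMod.pow_div_two_eq_neg_one_or_one p h0).resolve_left
        fun h1 => h x hx h0 ((ZMod.euler_criterion p h0).2 h1)⟩

/-- The case where `A - A` and `B - B` have the same character and `A - B` the opposite one. -/
lemma card_bound_of_opposite (d : ℕ) (hd : p = 2 * d + 1) (hneg : (-1 : ZMod p) ^ d = 1)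
    (A B : Finset (ZMod p)) (hdisj : Disjoint A B) (hA : 2 ≤ A.card) (hB : 2 ≤ B.card)
    (σ : ZMod p) (hσ : σ ≠ 0)
    (hAA : ∀ x ∈ A, ∀ s ∈ A, s ≠ x → (x - s) ^ d = σ)
    (hBB : ∀ x ∈ B, ∀ s ∈ B, s ≠ x → (x - s) ^ d = σ)
    (hAB : ∀ x ∈ A, ∀ s ∈ B, (x - s) ^ d = -σ) :
    (A.card + B.card) * (A.card + B.card - 2) ≤ d + (A.card + B.card) - 2 := by
  have hcard : (A ∪ B).card = A.card + B.card := Finset.card_union_of_disjoint hdisj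
  have hBA : ∀ x ∈ B, ∀ s ∈ A, (x - s) ^ d = -σ := by
    intro x hx s hs
    rw [← neg_sub, neg_pow, hneg, one_mul, hAB s hs x hx]
  have hmain : ∀ S ⊆ A ∪ B, 2 ≤ S.card → S.card ≤ d + 1 →
      S.card * (S.card - 2) ≤ d + S.card - 2 := by
    intro S hSub h2 hSd
    refine card_bound_of_twisted_pow_eq d hd S h2 hSd σ (fun s => if s ∈ A then 1 else -1) ?_ ?_
    · intro s _
      split_ifs <;> simp
    · intro x hx s hs hsx
      have hx' := Finset.mem_union.1 (hSub hx)
      have hs' := Finset.mem_union.1 (hSub hs)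
      split_ifs with h1 h3 h3
      · rw [hAA x h3 s h1 hsx]; ring
      · rw [hBA x (hx'.resolve_left h3) s h1]; ring
      · rw [hAB x h3 s (hs'.resolve_left h1)]; ring
      · rw [hBB x (hx'.resolve_left h3) s (hs'.resolve_left h1) hsx]; ring
  by_cases hle : A.card + B.card ≤ d + 1
  · rw [← hcard]
    exact hmain _ subset_rfl (by omega) (by omega)
  · -- A subset of size `d + 1` would already violate the bound, unless `d ≤ 2`.
    exfalso
    have hd1 : 1 ≤ d := by
      have := (Fact.out : p.Prime).two_le
      omega
    obtain ⟨S, hSub, hSc⟩ := Finset.exists_subset_card_eq (s := A ∪ B) (n := d + 1) (by omega)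
    have h1 := hmain S hSub (by omega) (by omega)
    rw [hSc] at h1
    have hd2 : d ≤ 2 := by
      by_contra hcon
      obtain ⟨e, rfl⟩ : ∃ e, d = e + 3 := ⟨d - 3, by omega⟩
      have e1 : e + 3 + 1 - 2 = e + 2 := by omega
      have e2 : e + 3 + (e + 3 + 1) - 2 = 2 * e + 5 := by omega
      rw [e1, e2] at h1
      nlinarith
    obtain rfl | rfl : d = 1 ∨ d = 2 := by omega
    · -- `p = 3`, where `-1` is not a square
      have : p = 3 := by omega
      subst this
      exact zmod_three_neg_one_pow_ne hneg
    · -- For `d = 2` the equations force `2 (a - a') (a - b) = σ`, which determines `b`.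
      obtain ⟨a, ha, a', ha', haa⟩ := Finset.one_lt_card.1 hA
      obtain ⟨b, hb, b', hb', hbb⟩ := Finset.one_lt_card.1 hB
      have hp5 : p = 5 := by omega
      subst hp5
      have k1 := hAA a ha a' ha' haa.symm
      have k2 := hAB a ha b hb
      have k3 := hAB a' ha' b hb
      have k4 := hAB a ha b' hb'
      have k5 := hAB a' ha' b' hb'
      have h2 : (2 : ZMod 5) ≠ 0 := zmod_five_two_ne_zero
      have k : (2 * (a - a')) * (b - b') = 0 := by linear_combination -k2 + k3 + k4 - k5
      rcases mul_eq_zero.1 k with k | k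
      · exact (mul_ne_zero h2 (sub_ne_zero.2 haa)) k
      · exact hbb (sub_eq_zero.1 k)

end Stepanov

/-- Corollary 4: if `A, B ⊆ GF(p)` are disjoint, each of size at least two, and each
of `A-A`, `A-B`, `B-B` consists (apart from `0`) of only squares or only non-squares,
then `min{|A|²-2|A|, |B|²-2|B|} + |A||B| + 2 ≤ (p+3)/2`. -/
theorem union_of_cliques_bound (p : ℕ) (hp : p.Prime) (hodd : Odd p)
    (A B : Finset (ZMod p)) (hdisj : Disjoint A B)
    (hA : 2 ≤ A.card) (hB : 2 ≤ B.card)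
    (hAA : UniformQuadraticCharacter p {x | ∃ a ∈ A, ∃ a' ∈ A, x = a - a'})
    (hAB : UniformQuadraticCharacter p {x | ∃ a ∈ A, ∃ b ∈ B, x = a - b})
    (hBB : UniformQuadraticCharacter p {x | ∃ b ∈ B, ∃ b' ∈ B, x = b - b'}) :
    min (A.card ^ 2 - 2 * A.card) (B.card ^ 2 - 2 * B.card) + A.card * B.card + 2 ≤
      (p + 3) / 2 := by
  have := Fact.mk hp
  obtain ⟨d, hd⟩ := hodd
  have hpd : p / 2 = d := by omega
  obtain ⟨σ₁, hσ₁, h₁⟩ := hAA.exists_pow_eq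
  obtain ⟨σ₂, hσ₂, h₂⟩ := hAB.exists_pow_eq
  obtain ⟨σ₃, hσ₃, h₃⟩ := hBB.exists_pow_eq
  rw [hpd] at h₁ h₂ h₃
  have kAA : ∀ x ∈ A, ∀ s ∈ A, s ≠ x → (x - s) ^ d = σ₁ := fun x hx s hs hne =>
    h₁ _ ⟨x, hx, s, hs, rfl⟩ (sub_ne_zero.2 hne.symm)
  have kBB : ∀ x ∈ B, ∀ s ∈ B, s ≠ x → (x - s) ^ d = σ₃ := fun x hx s hs hne =>
    h₃ _ ⟨x, hx, s, hs, rfl⟩ (sub_ne_zero.2 hne.symm)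
  have kAB : ∀ x ∈ A, ∀ s ∈ B, (x - s) ^ d = σ₂ := fun x hx s hs =>
    h₂ _ ⟨x, hx, s, hs, rfl⟩ (sub_ne_zero.2 fun h => Finset.disjoint_left.1 hdisj hx (h ▸ hs))
  have hσ₁0 : σ₁ ≠ 0 := by rcases hσ₁ with rfl | rfl <;> simp
  -- `-1` is a square, because `a - a'` and `a' - a` have the same character.
  have hneg : (-1 : ZMod p) ^ d = 1 := by
    obtain ⟨a, ha, a', ha', haa⟩ := Finset.one_lt_card.1 hA
    have e1 := kAA a ha a' ha' haa.symm
    have e2 := kAA a' ha' a ha haa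
    rw [← neg_sub, neg_pow, e1] at e2
    exact mul_right_cancel₀ hσ₁0 (by rw [e2, one_mul])
  have kBA : ∀ x ∈ B, ∀ s ∈ A, (x - s) ^ d = σ₂ := by
    intro x hx s hs
    rw [← neg_sub, neg_pow, hneg, one_mul, kAB s hs x hx]
  have hgoal : (p + 3) / 2 = d + 2 := by omega
  rw [hgoal]
  have hsq : ∀ n : ℕ, n ^ 2 - 2 * n ≤ n * (n - 1) := by
    intro n
    rw [Nat.mul_sub, mul_one, sq]
    omega
  by_cases h12 : σ₁ = σ₂
  · subst h12
    have hb := card_bound_of_pow_eq d hd A B hdisj hA σ₁ kAA kBA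
    have := min_le_left (A.card ^ 2 - 2 * A.card) (B.card ^ 2 - 2 * B.card)
    have := hsq A.card
    rw [mul_comm B.card] at hb
    omega
  by_cases h23 : σ₂ = σ₃
  · subst h23
    have hb := card_bound_of_pow_eq d hd B A hdisj.symm hB σ₂ kBB kAB
    have := min_le_right (A.card ^ 2 - 2 * A.card) (B.card ^ 2 - 2 * B.card)
    have := hsq B.card
    omega
  have hopp : ∀ x y : ZMod p, (x = 1 ∨ x = -1) → (y = 1 ∨ y = -1) → x ≠ y → y = -x := by
    rintro x y (rfl | rfl) (rfl | rfl) hxy <;> first | exact absurd rfl hxy | simp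
  have e2 : σ₂ = -σ₁ := hopp σ₁ σ₂ hσ₁ hσ₂ h12
  have e3 : σ₃ = σ₁ := by rw [hopp σ₂ σ₃ hσ₂ hσ₃ h23, e2, neg_neg]
  subst e2 e3
  have hb := card_bound_of_opposite d hd hneg A B hdisj hA hB _ hσ₁0 kAA kBB kAB
  have hmin := min_le_left (A.card ^ 2 - 2 * A.card) (B.card ^ 2 - 2 * B.card)
  obtain ⟨a, ha⟩ : ∃ a, A.card = a + 2 := ⟨A.card - 2, by omega⟩
  obtain ⟨b, hb'⟩ : ∃ b, B.card = b + 2 := ⟨B.card - 2, by omega⟩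
  rw [ha, hb'] at hb hmin ⊢
  have e4 : (a + 2) ^ 2 - 2 * (a + 2) = a * (a + 2) := by
    rw [sq, ← Nat.sub_mul, Nat.add_sub_cancel]
  have e5 : a + 2 + (b + 2) - 2 = a + b + 2 := by omega
  have e6 : d + (a + 2 + (b + 2)) - 2 = d + a + b + 2 := by omega
  rw [e4] at hmin ⊢
  rw [e5, e6] at hb
  nlinarith
end

section
/- Let p be a prime and let R, S ∈ GF(p)[x] be polynomials each with constant term equal to 1, with deg R ≥ 1. Suppose that R and its derivative R' are relatively prime and that R does not divide S. Then for every positive integer m not divisible by p, the polynomial x^(deg R + deg S + 1) does not divide R(x)^m · S(x) − 1. -/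
/-! If `X ^ (r + s + 1)` divides `R ^ m * S - 1`, with `r = deg R` and `s = deg S`, then
`X ^ (r + s)` divides the derivative `R ^ (m - 1) * (m R' S + R S')`. As `R` has constant
term `1`, it is coprime to `X`, so `X ^ (r + s)` divides `m R' S + R S'`, whose degree is less
than `r + s`. Hence `m R' S + R S' = 0`, and `R ∣ m R' S`; since `m` is a unit and `R` is
coprime to `R'`, this gives `R ∣ S`. -/

open Polynomial

/-- Lemma 6: if `R, S ∈ GF(p)[x]` have constant term `1`, `deg R ≥ 1`, `R` is coprime
to `R'`, and `R ∤ S`, then `x^(deg R + deg S + 1)` does not divide `R^m S - 1` for any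
positive integer `m` not divisible by `p`. -/
theorem lacunary_lemma (p : ℕ) (hp : p.Prime) (R S : Polynomial (ZMod p))
    (hR0 : R.coeff 0 = 1) (hS0 : S.coeff 0 = 1) (hRdeg : 1 ≤ R.natDegree)
    (hcop : IsCoprime R (derivative R)) (hndvd : ¬ R ∣ S)
    (m : ℕ) (hm : 0 < m) (hpm : ¬ (p ∣ m)) :
    ¬ (X ^ (R.natDegree + S.natDegree + 1) ∣ R ^ m * S - 1) := by
  have := Fact.mk hp
  intro h
  have hR : R ≠ 0 := by rintro rfl; simp at hR0
  have hS : S ≠ 0 := by rintro rfl; simp at hS0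
  have hmp : (m : ZMod p) ≠ 0 := fun h0 => hpm ((ZMod.natCast_eq_zero_iff m p).1 h0)
  have hX : IsCoprime (X : (ZMod p)[X]) R :=
    (prime_X.irreducible.coprime_iff_not_dvd).2 (by rw [X_dvd_iff, hR0]; exact one_ne_zero)
  have hder : derivative (R ^ m * S - 1)
      = R ^ (m - 1) * (C (m : ZMod p) * (derivative R * S) + R * derivative S) := by
    obtain ⟨k, rfl⟩ : ∃ k, m = k + 1 := ⟨m - 1, by omega⟩
    simp only [derivative_sub, derivative_mul, derivative_pow, derivative_one,
      Nat.add_sub_cancel]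
    ring
  have hd := pow_sub_one_dvd_derivative_of_pow_dvd h
  rw [Nat.add_sub_cancel, hder] at hd
  have hdvd := (hX.pow (m := R.natDegree + S.natDegree) (n := m - 1)).dvd_of_dvd_mul_left hd
  have hmul : ∀ {A B B' : (ZMod p)[X]}, A ≠ 0 → B'.degree < B.degree →
      (A * B').degree < (A * B).degree := by
    intro A B B' hA hB
    rw [degree_mul, degree_mul]
    exact WithBot.add_lt_add_left (degree_ne_bot.2 hA) hB
  have hdeg : (C (m : ZMod p) * (derivative R * S) + R * derivative S).degree
      < (X ^ (R.natDegree + S.natDegree) : (ZMod p)[X]).degree := by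
    have hXd : (X ^ (R.natDegree + S.natDegree) : (ZMod p)[X]).degree = (R * S).degree := by
      rw [degree_X_pow, degree_mul, degree_eq_natDegree hR, degree_eq_natDegree hS]
      norm_cast
    rw [hXd]
    refine (degree_add_le _ _).trans_lt (max_lt ?_ ?_)
    · rw [degree_C_mul hmp, mul_comm (derivative R), mul_comm R S]
      exact hmul hS (degree_derivative_lt hR)
    · exact hmul hR (degree_derivative_lt hS)
  have hz := eq_zero_of_dvd_of_degree_lt hdvd hdeg
  have h1 : R ∣ C (m : ZMod p) * (derivative R * S) :=
    ⟨-derivative S, by linear_combination hz⟩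
  have hu : IsUnit (C (m : ZMod p)) := isUnit_C.2 hmp.isUnit
  exact hndvd (hcop.dvd_of_dvd_mul_left (hu.dvd_mul_left.1 h1))
end

section
/- Let p be a prime, let U ⊆ (ZMod p)² be a finite set of points, and let y ∈ GF(p). Then the Rédei polynomial evaluated at y, namely H_y(x) = ∏_{(a,b) ∈ U} (x + a·y − b) ∈ GF(p)[x], divides x^p − x if and only if y is not a direction determined by U. -/
/-!
Write `H_y = ∏ (x - (b - a y))`. Over `GF(p)` the polynomial `x ^ p - x` has each field element as
a simple root, so `H_y` divides it exactly when the multiset of the values `b - a y`, for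
`(a, b) ∈ U`, has no repetition, i.e. when `(a, b) ↦ b - a y` is injective on `U`. Two distinct
points with the same value of `b - a y` are precisely two points on a line of slope `y`.
-/

open Polynomial

/-- The Rédei polynomial `H_y(x) = ∏_{(a,b) ∈ U} (x + a y - b)` divides `x^p - x`
if and only if `y` is not a direction determined by `U`. -/
theorem redei_divides_iff_not_direction (p : ℕ) (hp : p.Prime)
    (U : Finset (ZMod p × ZMod p)) (y : ZMod p) :
    (∏ P ∈ U, (X + C P.1 * C y - C P.2)) ∣ (X ^ p - X : Polynomial (ZMod p)) ↔
      some y ∉ dirSet p ↑U := by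
  have : Fact p.Prime := ⟨hp⟩
  have hprod : (∏ P ∈ U, (X + C P.1 * C y - C P.2) : Polynomial (ZMod p)) =
      ((U.val.map fun P => P.2 - P.1 * y).map fun a => X - C a).prod := by
    rw [Multiset.map_map]
    refine Finset.prod_congr rfl fun P _ => ?_
    simp only [Function.comp, map_sub, map_mul]
    ring
  have hroots : (X ^ p - X : Polynomial (ZMod p)).roots = Finset.univ.val := by
    have h := FiniteField.roots_X_pow_card_sub_X (ZMod p)
    rwa [ZMod.card] at h
  rw [hprod, Multiset.prod_X_sub_C_dvd_iff_le_roots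
    (FiniteField.X_pow_card_sub_X_ne_zero (ZMod p) hp.one_lt), hroots]
  have hnodup : ∀ s : Multiset (ZMod p), s ≤ Finset.univ.val ↔ s.Nodup := fun s =>
    ⟨fun h => Multiset.nodup_of_le h Finset.univ.nodup,
      fun h => (Multiset.le_iff_subset h).2 fun a _ => Finset.mem_univ a⟩
  rw [hnodup, Multiset.nodup_map_iff_inj_on U.nodup]
  constructor
  · rintro hinj ⟨P, hP, Q, hQ, hPQ, ⟨-, h⟩ | ⟨hne, h⟩⟩
    · cases h
    · refine hPQ (hinj P hP Q hQ ?_)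
      have hy : y * (P.1 - Q.1) = P.2 - Q.2 := by
        rw [Option.some.inj h, inv_mul_cancel_right₀ (sub_ne_zero.2 hne)]
      linear_combination -hy
  · intro hdir P hP Q hQ hval
    by_contra hPQ
    -- Equal first coordinates and equal values of `b - a y` would force `P = Q`.
    have hne : P.1 ≠ Q.1 := fun h => hPQ (Prod.ext h (by linear_combination hval + y * h))
    refine hdir ⟨P, hP, Q, hQ, hPQ, Or.inr ⟨hne, congrArg some ?_⟩⟩
    rw [eq_mul_inv_iff_mul_eq₀ (sub_ne_zero.2 hne)]
    linear_combination -hval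
end

section
/- Let p be a prime, let n ≥ 2 be an integer with p > 2n, let A = {0, 1} ⊆ GF(p) and B = {0, 1, …, n−1} ⊆ GF(p) (the images of these integers in ZMod p). Then the point set A × B ⊆ AG(2,p) determines exactly 2n directions; in particular the lower bound |A||B| − min{|A|,|B|} + 2 = 2n of Theorem 1 is attained. -/
/-- The finite directions are enumerated as `i - (n - 1)` for `0 ≤ i < 2n - 1`. -/
theorem dirSet_grid (p n : ℕ) [Fact p.Prime] (hn : 2 ≤ n) :
    dirSet p {P : ZMod p × ZMod p |
        (P.1 = 0 ∨ P.1 = 1) ∧ ∃ k : ℕ, k < n ∧ P.2 = (k : ZMod p)} =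
      ((Finset.range (2 * n - 1)).image
        fun i : ℕ => (i : ZMod p) - ((n - 1 : ℕ) : ZMod p)).insertNone := by
  -- A difference `k - l` of two residues in the column is `i - (n - 1)` with `i = k + (n - 1 - l)`.
  have key : ∀ k l : ℕ, k < n → l < n → ∃ i < 2 * n - 1,
      (i : ZMod p) - ((n - 1 : ℕ) : ZMod p) = (k : ZMod p) - l := by
    intro k l hk hl
    refine ⟨k + (n - 1 - l), by omega, ?_⟩
    rw [Nat.cast_add, Nat.cast_sub (show l ≤ n - 1 by omega)]
    ring
  ext d
  rw [Finset.mem_coe, Finset.mem_insertNone]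
  simp only [Finset.mem_image, Finset.mem_range]
  constructor
  · rintro ⟨⟨a, b⟩, ⟨ha, k, hk, hb⟩, ⟨a', b'⟩, ⟨ha', l, hl, hb'⟩, -, ⟨-, rfl⟩ | ⟨hne, rfl⟩⟩ e he
    · simp at he
    · simp only at ha hb ha' hb' hne he
      subst hb hb'
      obtain rfl : _ = e := by simpa using he
      rcases ha with rfl | rfl <;> rcases ha' with rfl | rfl
      · exact absurd rfl hne
      · obtain ⟨i, hi, h⟩ := key l k hl hk
        exact ⟨i, hi, by rw [h, zero_sub, inv_neg, inv_one]; ring⟩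
      · obtain ⟨i, hi, h⟩ := key k l hk hl
        exact ⟨i, hi, by rw [h, sub_zero, inv_one, mul_one]⟩
      · exact absurd rfl hne
  · intro h
    cases d with
    | none =>
      exact ⟨(0, 0), ⟨Or.inl rfl, 0, by omega, by simp⟩, (0, 1), ⟨Or.inl rfl, 1, by omega, by simp⟩,
        by simp, Or.inl ⟨rfl, rfl⟩⟩
    | some e =>
      obtain ⟨i, hi, rfl⟩ := h e rfl
      -- Join `(1, k)` to `(0, l)`, where `l` is the top or the bottom of the column.
      obtain ⟨k, l, hk, hl, hkl⟩ : ∃ k l : ℕ, k < n ∧ l < n ∧ i + l = k + (n - 1) := by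
        by_cases hin : i < n
        · exact ⟨i, n - 1, hin, by omega, rfl⟩
        · exact ⟨i - (n - 1), 0, by omega, by omega, by omega⟩
      refine ⟨(1, k), ⟨Or.inr rfl, k, hk, rfl⟩, (0, l), ⟨Or.inl rfl, l, hl, rfl⟩, by simp,
        Or.inr ⟨by simp, ?_⟩⟩
      have h := congrArg (Nat.cast : ℕ → ZMod p) hkl
      rw [Nat.cast_add, Nat.cast_add] at h
      simp only [sub_zero, inv_one, mul_one]
      congr 1
      linear_combination h

/-- The grid `{0,1} × {0,1,…,n-1}` with `p > 2n` determines exactly `2n` directions,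
attaining the lower bound `|A||B| - min{|A|,|B|} + 2 = 2n` of Theorem 1. -/
theorem directions_of_two_by_n_grid (p n : ℕ) (hp : p.Prime) (hn : 2 ≤ n)
    (hpn : 2 * n < p) :
    (dirSet p {P : ZMod p × ZMod p |
        (P.1 = 0 ∨ P.1 = 1) ∧ ∃ k : ℕ, k < n ∧ P.2 = (k : ZMod p)}).ncard = 2 * n := by
  have : Fact p.Prime := ⟨hp⟩
  rw [dirSet_grid p n hn, Set.ncard_coe_finset, Finset.card_insertNone, Finset.card_image_of_injOn,
    Finset.card_range]
  · omega
  · intro i hi j hj hij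
    simp only [Finset.coe_range, Set.mem_Iio] at hi hj
    have h : (i : ZMod p) = j := sub_left_injective hij
    exact Nat.ModEq.eq_of_lt_of_lt ((ZMod.natCast_eq_natCast_iff i j p).1 h) (by omega) (by omega)
end

section
/- Let p be a prime, let n ≥ 3 be an odd integer with p > 3n, let A = {0, 1, 2} ⊆ GF(p) and B = {0, 1, …, n−1} ⊆ GF(p) (the images of these integers in ZMod p). Then the point set A × B ⊆ AG(2,p) determines exactly 3n − 1 directions; in particular the lower bound |A||B| − min{|A|,|B|} + 2 = 3n − 1 of Theorem 1 is attained. -/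
lemma intCast_inj_of_abs_sub_lt {p : ℕ} {a b : ℤ} (h : |a - b| < p)
    (hab : (a : ZMod p) = (b : ZMod p)) : a = b := by
  have h1 : (p : ℤ) ∣ a - b := by
    rw [← ZMod.intCast_zmod_eq_zero_iff_dvd]
    push_cast
    rw [hab, sub_self]
  have := Int.eq_zero_of_abs_lt_dvd h1 h
  omega

lemma two_ne_zero_zmod {p : ℕ} (hp2 : 2 < p) : (2 : ZMod p) ≠ 0 := by
  intro h
  have : (2 : ℤ) = 0 := by
    apply intCast_inj_of_abs_sub_lt (p := p)
    · norm_num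
      exact hp2
    · push_cast
      exact h
  omega

/-- The directions of the grid are the vertical one and the residues of `e` and `e / 2` for
integers `|e| ≤ 2m`; the halves are described by `2 * x = e`. -/
lemma dirSet_grid_eq (p m : ℕ) [Fact p.Prime] (hp2 : 2 < p) (hm : 1 ≤ m) :
    dirSet p {P : ZMod p × ZMod p |
        (P.1 = 0 ∨ P.1 = 1 ∨ P.1 = 2) ∧ ∃ k : ℕ, k < 2 * m + 1 ∧ P.2 = (k : ZMod p)}
      = insert none (some '' {x : ZMod p | ∃ e : ℤ, |e| ≤ 2 * m ∧ (x = e ∨ 2 * x = e)}) := by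
  have h2 := two_ne_zero_zmod hp2
  ext d
  constructor
  · rintro ⟨⟨a, b⟩, ⟨ha, k, hk, hb⟩, ⟨a', b'⟩, ⟨ha', k', hk', hb'⟩, -, h⟩
    simp only at ha hb ha' hb' h
    rcases h with ⟨-, rfl⟩ | ⟨hne, rfl⟩
    · exact Or.inl rfl
    · refine Or.inr ⟨_, ?_, rfl⟩
      have habs : |(k : ℤ) - k'| ≤ 2 * m := by rw [abs_le]; omega
      have habs' : |(k' : ℤ) - k| ≤ 2 * m := by rw [abs_le]; omega
      have hs : a - a' ≠ 0 := sub_ne_zero.mpr hne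
      subst hb hb'
      -- The sign of the column difference decides the order of the ordinates in the witness.
      rcases ha with rfl | rfl | rfl <;> rcases ha' with rfl | rfl | rfl
      · exact absurd rfl hne
      · exact ⟨k' - k, habs', Or.inl (by push_cast; field_simp; ring)⟩
      · exact ⟨k' - k, habs', Or.inr (by push_cast; field_simp; ring)⟩
      · exact ⟨k - k', habs, Or.inl (by push_cast; field_simp; ring)⟩
      · exact absurd rfl hne
      · refine ⟨k' - k, habs', Or.inl ?_⟩
        rw [← div_eq_mul_inv, div_eq_iff hs]; push_cast; ring
      · exact ⟨k - k', habs, Or.inr (by push_cast; field_simp; ring)⟩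
      · refine ⟨k - k', habs, Or.inl ?_⟩
        rw [← div_eq_mul_inv, div_eq_iff hs]; push_cast; ring
      · exact absurd rfl hne
  · rintro (rfl | ⟨x, ⟨e, he, hx⟩, rfl⟩)
    · refine ⟨(0, 0), ⟨Or.inl rfl, 0, by omega, by simp⟩,
        (0, 1), ⟨Or.inl rfl, 1, by omega, by simp⟩, ?_, Or.inl ⟨rfl, rfl⟩⟩
      have : Nontrivial (ZMod p) := inferInstance
      simp
    · rw [abs_le] at he
      obtain ⟨i, j, hi, hj, rfl⟩ : ∃ i j : ℕ, i < 2 * m + 1 ∧ j < 2 * m + 1 ∧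
          e = (i : ℤ) - j := ⟨e.toNat, (-e).toNat, by omega, by omega, by omega⟩
      push_cast at hx
      rcases hx with rfl | hx
      · exact ⟨(1, i), ⟨Or.inr (Or.inl rfl), i, hi, rfl⟩, (0, j), ⟨Or.inl rfl, j, hj, rfl⟩,
          by simp, Or.inr ⟨by simp, by simp⟩⟩
      · refine ⟨(2, i), ⟨Or.inr (Or.inr rfl), i, hi, rfl⟩, (0, j), ⟨Or.inl rfl, j, hj, rfl⟩,
          by simp [h2], Or.inr ⟨by simpa using h2, ?_⟩⟩
        simp only [← hx, sub_zero]
        congr 1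
        field_simp

/-- The redundant halves `e / 2` with `e` even are absorbed by the integer slopes. -/
lemma slopes_eq_union (p m : ℕ) [Fact p.Prime] (hp2 : 2 < p) :
    {x : ZMod p | ∃ e : ℤ, |e| ≤ 2 * m ∧ (x = e ∨ 2 * x = e)}
      = ((Finset.Icc (-(2 * m : ℤ)) (2 * m)).image (fun e : ℤ => (e : ZMod p)) ∪
        (Finset.Ico (-(m : ℤ)) m).image (fun k : ℤ => (2 * k + 1 : ZMod p) / 2) :
          Finset (ZMod p)) := by
  have h2 := two_ne_zero_zmod hp2
  ext x
  simp only [Set.mem_ofPred_eq, Finset.coe_union, Finset.coe_image, Set.mem_union, Set.mem_image,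
    Finset.mem_coe, Finset.mem_Icc, Finset.mem_Ico, abs_le]
  constructor
  · rintro ⟨e, he, rfl | hx⟩
    · exact Or.inl ⟨e, he, rfl⟩
    · obtain ⟨k, rfl | rfl⟩ := Int.even_or_odd' e
      · refine Or.inl ⟨k, by omega, ?_⟩
        push_cast at hx
        exact (mul_left_cancel₀ h2 hx).symm
      · refine Or.inr ⟨k, by omega, ?_⟩
        push_cast at hx
        rw [← hx]
        field_simp
  · rintro (⟨e, he, rfl⟩ | ⟨k, hk, rfl⟩)
    · exact ⟨e, he, Or.inl rfl⟩
    · exact ⟨2 * k + 1, by omega, Or.inr (by push_cast; field_simp)⟩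

lemma card_slopes (p m : ℕ) [Fact p.Prime] (hm : 1 ≤ m) (hpm : 6 * m < p) :
    ((Finset.Icc (-(2 * m : ℤ)) (2 * m)).image (fun e : ℤ => (e : ZMod p)) ∪
        (Finset.Ico (-(m : ℤ)) m).image (fun k : ℤ => (2 * k + 1 : ZMod p) / 2)).card
      = 6 * m + 1 := by
  have h2 := two_ne_zero_zmod (p := p) (by omega)
  rw [Finset.card_union_of_disjoint, Finset.card_image_of_injOn, Finset.card_image_of_injOn,
    Int.card_Icc, Int.card_Ico]
  · omega
  · intro a ha b hb hab
    simp only [Finset.coe_Ico, Set.mem_Ico] at ha hb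
    have : (2 * a + 1 : ℤ) = 2 * b + 1 := by
      apply intCast_inj_of_abs_sub_lt (p := p)
      · rw [abs_lt]; omega
      · push_cast
        exact (div_left_inj' h2).mp hab
    omega
  · intro a ha b hb hab
    simp only [Finset.coe_Icc, Set.mem_Icc] at ha hb
    exact intCast_inj_of_abs_sub_lt (p := p) (by rw [abs_lt]; omega) hab
  · rw [Finset.disjoint_left]
    intro x hx hx'
    simp only [Finset.mem_image, Finset.mem_Icc, Finset.mem_Ico] at hx hx'
    obtain ⟨e, he, rfl⟩ := hx
    obtain ⟨k, hk, hke⟩ := hx'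
    -- Here `|(2k + 1) - 2e| ≤ (2m - 1) + 4m < p`, while the two sides have different parity.
    have : (2 * k + 1 : ℤ) = 2 * e := by
      apply intCast_inj_of_abs_sub_lt (p := p)
      · rw [abs_lt]; omega
      · push_cast
        rw [div_eq_iff h2] at hke
        rw [hke, mul_comm]
    omega

/-- The grid `{0,1,2} × {0,1,…,n-1}` with `n ≥ 3` odd and `p > 3n` determines exactly
`3n - 1` directions, attaining the bound `|A||B| - min{|A|,|B|} + 2 = 3n - 1` of Theorem 1. -/
theorem directions_of_three_by_n_grid (p n : ℕ) (hp : p.Prime) (hn : 3 ≤ n)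
    (hodd : Odd n) (hpn : 3 * n < p) :
    (dirSet p {P : ZMod p × ZMod p |
        (P.1 = 0 ∨ P.1 = 1 ∨ P.1 = 2) ∧ ∃ k : ℕ, k < n ∧ P.2 = (k : ZMod p)}).ncard
      = 3 * n - 1 := by
  have : Fact p.Prime := ⟨hp⟩
  obtain ⟨m, rfl⟩ := hodd
  rw [dirSet_grid_eq p m (by omega) (by omega), slopes_eq_union p m (by omega),
    Set.ncard_insert_of_notMem (by simp) (Set.toFinite _),
    Set.ncard_image_of_injective _ (Option.some_injective _), Set.ncard_coe_finset,
    card_slopes p m (by omega) (by omega)]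
  omega
end
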